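/- Let 0 < p ≤ 1 and δ > n/p − (n+1)/2. Then there exists a constant C > 0, independent of f, such that for every f in the (unweighted) weak Hardy space WH^p(R^n) one has ‖T^δ_* f‖_{WL^p} ≤ C ‖f‖_{WH^p}, i.e. sup_{λ>0} λ^p · |{x ∈ R^n : T^δ_* f(x) > λ}| ≤ C^p ‖f‖_{WH^p}^p, where |·| denotes Lebesgue measure. -/

import Mathlib

/-!
Put `M = δ + (n + 1) / 2`; the hypotheses say that `M > n / p ≥ n`.

The Bochner–Riesz kernel `K` is radial, so its size may be computed on a coordinate axis, where
integrating out the other variables leaves the Fourier integral of `(1 - s²)₊^(δ + (n - 1) / 2)`.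
Moving the contour into the upper half plane gives `|K(x)| ≲ (1 + |x|)^(-M)`. Since the multiplier
has compact support, `K = K * Φ` for a Schwartz function `Φ`, so all derivatives of `K` decay at the
same rate.

A smooth partition of unity over the lattice `ℤⁿ` cuts `K` into pieces. With `t = 1 / R` and `G`
the grand maximal function of `f`, the piece near `u`, recentred at `x - t u`, is
`O((1 + |u|)^(-M))` times a test function and hence contributes at most a multiple of
`(1 + |u|)^(-M) G(x - t u)` to `T_R f(x)`. For `r ≤ 1` we have `(∑ a)^r ≤ ∑ a^r`, so averaging over
the position of each `u` in its lattice cell yields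
`|T_R f(x)|^r ≲ ∫ (1 + |u|)^(-r M) G(x - t u)^r du`, which for `r M > n` is at most a multiple of
the centred maximal function of `G^r` at `x`. Choosing `n / M < r < p`, the theorem follows from the
boundedness of the centred maximal operator on weak `L^(p / r)`, as `p / r > 1`.
-/

open MeasureTheory Real Complex Set
open scoped ENNReal NNReal FourierTransform

noncomputable section

/-- Euclidean space `ℝⁿ`. -/
abbrev Euc (n : ℕ) := EuclideanSpace ℝ (Fin n)

/-- The axis-parallel closed cube centered at `x₀` with side length `r`. -/
def cube {n : ℕ} (x₀ : Euc n) (r : ℝ) : Set (Euc n) :=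
  {y | ∀ i, |y i - x₀ i| ≤ r / 2}

/-- The weighted measure `w(E) = ∫_E w(x) dx`. -/
def wMeasure {n : ℕ} (w : Euc n → ℝ) : Measure (Euc n) :=
  (volume : Measure (Euc n)).withDensity fun x => ENNReal.ofReal (w x)

/-- The Muckenhoupt class `A₁`: `w` is nonnegative, locally integrable, and the average of `w`
over any cube is dominated by a constant times the essential infimum of `w` over that cube. -/
def IsA1 {n : ℕ} (w : Euc n → ℝ) : Prop :=
  (∀ x, 0 ≤ w x) ∧ LocallyIntegrable w volume ∧
    ∃ C : ℝ, 0 < C ∧ ∀ (x₀ : Euc n) (r : ℝ), 0 < r →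
      (∫ x in cube x₀ r, w x) / r ^ n ≤ C * essInf w (volume.restrict (cube x₀ r))

/-- The Muckenhoupt class `A_q`, `1 < q < ∞`. -/
def IsAq {n : ℕ} (w : Euc n → ℝ) (q : ℝ) : Prop :=
  (∀ x, 0 ≤ w x) ∧ LocallyIntegrable w volume ∧
    ∃ C : ℝ, 0 < C ∧ ∀ (x₀ : Euc n) (r : ℝ), 0 < r →
      ((∫ x in cube x₀ r, w x) / r ^ n) *
        ((∫ x in cube x₀ r, w x ^ (-1 / (q - 1))) / r ^ n) ^ (q - 1) ≤ C

/-- The critical index `q_w = inf {q > 1 : w ∈ A_q}` of a weight `w`. -/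
def criticalIndex {n : ℕ} (w : Euc n → ℝ) : ℝ :=
  sInf {q : ℝ | 1 < q ∧ IsAq w q}

/-- The `L¹`-dilation `g_t(x) = t⁻ⁿ g(x / t)`. -/
def dil {n : ℕ} (g : Euc n → ℂ) (t : ℝ) (x : Euc n) : ℂ :=
  ((t ^ n)⁻¹ : ℝ) • g ((t⁻¹ : ℝ) • x)

/-- The Bochner-Riesz kernel `φ` of order `δ`, i.e. the inverse Fourier transform of
`ξ ↦ (1 - |ξ|²)₊^δ`. -/
def brKernel (n : ℕ) (δ : ℝ) : Euc n → ℂ :=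
  𝓕⁻ fun ξ : Euc n => (Complex.ofReal (((1 - ‖ξ‖ ^ 2) ⊔ 0) ^ δ))

/-- The Bochner-Riesz operator `T^δ_R f = φ_{1/R} * f` of order `δ`. -/
def brOp (n : ℕ) (δ R : ℝ) (f : Euc n → ℂ) (x : Euc n) : ℂ :=
  ∫ y, dil (brKernel n δ) R⁻¹ (x - y) * f y

/-- The maximal Bochner-Riesz operator `T^δ_* f(x) = sup_{R > 0} |T^δ_R f(x)|`. -/
def maxBR (n : ℕ) (δ : ℝ) (f : Euc n → ℂ) (x : Euc n) : ℝ≥0∞ :=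
  ⨆ (R : ℝ) (_ : 0 < R), (‖brOp n δ R f x‖₊ : ℝ≥0∞)

/-- Partial derivative in the `i`-th coordinate direction. -/
def pderiv' {n : ℕ} (i : Fin n) (f : Euc n → ℂ) : Euc n → ℂ :=
  fun x => fderiv ℝ f x (EuclideanSpace.single i 1)

/-- The multi-index partial derivative `D^α f`. -/
def mderiv {n : ℕ} (α : Fin n → ℕ) (f : Euc n → ℂ) : Euc n → ℂ :=
  (((List.finRange n).map fun i => (pderiv' i)^[α i]).foldr (· ∘ ·) id) f

/-- The test function class
`𝒜_N = {φ ∈ 𝒮 : sup_x sup_{|α| ≤ N+1} (1+|x|)^{N+n+1} |D^α φ(x)| ≤ 1}`. -/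
def inTestClass {n : ℕ} (N : ℕ) (φ : SchwartzMap (Euc n) ℂ) : Prop :=
  ∀ (x : Euc n) (α : Fin n → ℕ), (∑ i, α i) ≤ N + 1 →
    (1 + ‖x‖) ^ (N + n + 1) * ‖mderiv α (⇑φ) x‖ ≤ 1

/-- The radial grand maximal function
`G⁺ f(x) = sup_{φ ∈ 𝒜_N} sup_{t > 0} |(φ_t * f)(x)|`. -/
def grandMax {n : ℕ} (N : ℕ) (f : Euc n → ℂ) (x : Euc n) : ℝ≥0∞ :=
  ⨆ (φ : SchwartzMap (Euc n) ℂ) (_ : inTestClass N φ) (t : ℝ) (_ : 0 < t),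
    (‖∫ y, dil (⇑φ) t (x - y) * f y‖₊ : ℝ≥0∞)

/-- The weak `L^p` quasinorm `sup_{λ > 0} λ · μ({x : g(x) > λ})^{1/p}` of an
`ℝ≥0∞`-valued function with respect to the measure `μ`. -/
def weakNorm {n : ℕ} (μ : Measure (Euc n)) (p : ℝ) (g : Euc n → ℝ≥0∞) : ℝ≥0∞ :=
  ⨆ (lam : ℝ≥0) (_ : 0 < lam), (lam : ℝ≥0∞) * μ {x | (lam : ℝ≥0∞) < g x} ^ (1 / p)

/-- The weak Hardy space quasinorm `‖f‖_{WH^p_w} = ‖G⁺ f‖_{WL^p_w}`, with grand maximal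
function taken over the test class `𝒜_N`. -/
def whNorm {n : ℕ} (N : ℕ) (μ : Measure (Euc n)) (p : ℝ) (f : Euc n → ℂ) : ℝ≥0∞ :=
  weakNorm μ p (grandMax N f)

/-- The Hardy-Littlewood maximal function (over cubes containing `x`). -/
def hlMax {n : ℕ} (f : Euc n → ℂ) (x : Euc n) : ℝ≥0∞ :=
  ⨆ (x₀ : Euc n) (r : ℝ) (_ : 0 < r) (_ : x ∈ cube x₀ r),
    (volume (cube x₀ r))⁻¹ * ∫⁻ y in cube x₀ r, (‖f y‖₊ : ℝ≥0∞)

/-! ### Weak Lebesgue quasinorms and the centred maximal operator -/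

section WeakNorm

variable {n : ℕ} {μ : Measure (Euc n)} {p : ℝ} {g h : Euc n → ℝ≥0∞}

lemma weakNorm_le_iff {C : ℝ≥0∞} :
    weakNorm μ p g ≤ C ↔
      ∀ lam : ℝ≥0, 0 < lam → (lam : ℝ≥0∞) * μ {x | (lam : ℝ≥0∞) < g x} ^ (1 / p) ≤ C :=
  iSup₂_le_iff

lemma mul_measure_rpow_le_weakNorm {lam : ℝ≥0} (hlam : 0 < lam) :
    (lam : ℝ≥0∞) * μ {x | (lam : ℝ≥0∞) < g x} ^ (1 / p) ≤ weakNorm μ p g :=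
  weakNorm_le_iff.1 le_rfl lam hlam

lemma measure_lt_le_weakNorm_div_rpow (hp : 0 < p) {lam : ℝ≥0} (hlam : 0 < lam) :
    μ {x | (lam : ℝ≥0∞) < g x} ≤ (weakNorm μ p g / lam) ^ p := by
  rw [← ENNReal.rpow_inv_le_iff hp, ← one_div,
    ENNReal.le_div_iff_mul_le (.inl (by exact_mod_cast hlam.ne')) (.inl ENNReal.coe_ne_top),
    mul_comm]
  exact mul_measure_rpow_le_weakNorm hlam

lemma weakNorm_mono (hp : 0 ≤ p) (hgh : ∀ x, g x ≤ h x) : weakNorm μ p g ≤ weakNorm μ p h := by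
  refine weakNorm_le_iff.2 fun lam hlam ↦ le_trans ?_ (mul_measure_rpow_le_weakNorm hlam)
  gcongr with x
  exact hgh x

lemma weakNorm_const_mul_le {c : ℝ≥0} (hc : 0 < c) :
    weakNorm μ p (fun x ↦ c * g x) ≤ c * weakNorm μ p g := by
  refine weakNorm_le_iff.2 fun lam hlam ↦ ?_
  have hset : {x | (lam : ℝ≥0∞) < c * g x} = {x | ((lam / c : ℝ≥0) : ℝ≥0∞) < g x} := by
    ext x
    rw [mem_ofPred_eq, mem_ofPred_eq, ENNReal.coe_div hc.ne',
      ENNReal.div_lt_iff (.inl (by exact_mod_cast hc.ne')) (.inl ENNReal.coe_ne_top), mul_comm]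
  calc (lam : ℝ≥0∞) * μ {x | (lam : ℝ≥0∞) < c * g x} ^ (1 / p)
      = c * ((lam / c : ℝ≥0) * μ {x | ((lam / c : ℝ≥0) : ℝ≥0∞) < g x} ^ (1 / p)) := by
        rw [hset, ← mul_assoc, ← ENNReal.coe_mul, mul_div_cancel₀ _ hc.ne']
    _ ≤ c * weakNorm μ p g := by gcongr; exact mul_measure_rpow_le_weakNorm (by positivity)

lemma weakNorm_rpow_le {r : ℝ} (hr : 0 < r) :
    weakNorm μ (p / r) (fun x ↦ g x ^ r) ≤ weakNorm μ p g ^ r := by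
  refine weakNorm_le_iff.2 fun lam hlam ↦ ?_
  have hset : {x | (lam : ℝ≥0∞) < g x ^ r} = {x | ((lam ^ r⁻¹ : ℝ≥0) : ℝ≥0∞) < g x} := by
    ext x
    rw [mem_ofPred_eq, mem_ofPred_eq, ← ENNReal.rpow_inv_lt_iff hr,
      ENNReal.coe_rpow_of_nonneg _ (by positivity)]
  calc (lam : ℝ≥0∞) * μ {x | (lam : ℝ≥0∞) < g x ^ r} ^ (1 / (p / r))
      = ((lam ^ r⁻¹ : ℝ≥0) * μ {x | ((lam ^ r⁻¹ : ℝ≥0) : ℝ≥0∞) < g x} ^ (1 / p)) ^ r := by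
        rw [ENNReal.mul_rpow_of_nonneg _ _ hr.le, ← ENNReal.rpow_mul, hset, one_div_div,
          one_div_mul_eq_div, ← ENNReal.coe_rpow_of_nonneg _ hr.le, ← NNReal.rpow_mul,
          inv_mul_cancel₀ hr.ne', NNReal.rpow_one]
    _ ≤ weakNorm μ p g ^ r := by gcongr; exact mul_measure_rpow_le_weakNorm (by positivity)

end WeakNorm

section LayerCake

variable {α : Type*} [MeasurableSpace α] {μ : Measure α}

lemma lintegral_le_lintegral_measure_lt (h : α → ℝ≥0∞) :
    ∫⁻ x, h x ∂μ ≤ ∫⁻ s in Ioi (0 : ℝ), μ {x | ENNReal.ofReal s < h x} := by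
  rw [lintegral_eq_nnreal]
  refine iSup₂_le fun φ hφ ↦ ?_
  have hcake := lintegral_eq_lintegral_meas_lt μ (f := fun x ↦ (φ x : ℝ))
    (.of_forall fun x ↦ (φ x).coe_nonneg) φ.measurable.coe_nnreal_real.aemeasurable
  simp only [ENNReal.ofReal_coe_nnreal] at hcake
  rw [← SimpleFunc.lintegral_eq_lintegral]
  simp only [SimpleFunc.map_apply]
  rw [hcake]
  refine setLIntegral_mono' measurableSet_Ioi fun s hs ↦ measure_mono fun x hx ↦ ?_
  refine lt_of_lt_of_le ?_ (hφ x)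
  rwa [ENNReal.ofReal_lt_coe_iff (le_of_lt hs)]

lemma lintegral_Ioi_rpow_neg {q t : ℝ} (hq : 1 < q) (ht : 0 < t) :
    ∫⁻ s in Ioi t, ENNReal.ofReal ((s / t) ^ (-q)) = ENNReal.ofReal (t / (q - 1)) := by
  have hint : IntegrableOn (fun s ↦ (s / t) ^ (-q)) (Ioi t) := by
    refine IntegrableOn.congr_fun
      (Integrable.div_const (integrableOn_Ioi_rpow_of_lt (neg_lt_neg hq) ht) (t ^ (-q)))
      (fun s hs ↦ (div_rpow (ht.trans hs).le ht.le _).symm) measurableSet_Ioi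
  rw [← ofReal_integral_eq_lintegral_ofReal hint
    ((ae_restrict_iff' measurableSet_Ioi).2 <| .of_forall fun s hs ↦
      rpow_nonneg (div_nonneg (ht.trans hs).le ht.le) _),
    setIntegral_congr_fun measurableSet_Ioi
      (fun s hs ↦ div_rpow (ht.trans hs).le ht.le (-q)), integral_div,
    integral_Ioi_rpow_of_lt (neg_lt_neg hq) ht, rpow_add ht, rpow_one]
  congr 1
  have : t ^ (-q) ≠ 0 := (rpow_pos_of_pos ht _).ne'
  have : -q + 1 ≠ 0 := by linarith
  have : q - 1 ≠ 0 := by linarith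
  field_simp
  ring

lemma div_ofReal_rpow_eq_mul {t : ℝ≥0} (ht : 0 < t) {s q : ℝ} (hs : 0 < s) (hq : 0 ≤ q)
    (W : ℝ≥0∞) :
    (W / ENNReal.ofReal s) ^ q = (W / t) ^ q * ENNReal.ofReal ((s / t) ^ (-q)) := by
  have hst : W / ENNReal.ofReal s = W / t * ENNReal.ofReal (s / t)⁻¹ := by
    rw [inv_div, ENNReal.ofReal_div_of_pos hs, ENNReal.ofReal_coe_nnreal, ← mul_div_assoc,
      ENNReal.div_mul_cancel (by exact_mod_cast ht.ne') ENNReal.coe_ne_top]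
  rw [hst, ENNReal.mul_rpow_of_nonneg _ _ hq, ENNReal.ofReal_rpow_of_pos (by positivity),
    rpow_neg (by positivity), inv_rpow (by positivity)]

lemma lintegral_indicator_lt_le_of_measure_lt_le {h : α → ℝ≥0∞} {q : ℝ} (hq : 1 < q) {W : ℝ≥0∞}
    (hW : ∀ s : ℝ≥0, 0 < s → μ {x | s < h x} ≤ (W / s) ^ q) {t : ℝ≥0} (ht : 0 < t) :
    ∫⁻ x, {x | t < h x}.indicator h x ∂μ ≤ ENNReal.ofReal (q / (q - 1)) * t * (W / t) ^ q := by
  have hq0 : 0 < q := by linarith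
  have hlow (s : ℝ) : μ {x | ENNReal.ofReal s < {x | t < h x}.indicator h x} ≤ (W / t) ^ q :=
    (measure_mono fun x hx ↦ by_contra fun hxt ↦ by
      simp [indicator_of_notMem hxt] at hx).trans (hW t ht)
  have hhigh (s : ℝ) (hs : t < s) : μ {x | ENNReal.ofReal s < {x | t < h x}.indicator h x} ≤
      (W / t) ^ q * ENNReal.ofReal ((s / t) ^ (-q)) := by
    have hs0 : 0 < s := t.coe_nonneg.trans_lt hs
    calc μ {x | ENNReal.ofReal s < {x | t < h x}.indicator h x}
        ≤ μ {x | ENNReal.ofReal s < h x} := by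
          gcongr with x
          exact indicator_le_self _ _ _
      _ ≤ (W / ENNReal.ofReal s) ^ q := hW s.toNNReal (by simpa)
      _ = (W / t) ^ q * ENNReal.ofReal ((s / t) ^ (-q)) := div_ofReal_rpow_eq_mul ht hs0 hq0.le W
  have hsplit : Ioi (0 : ℝ) = Ioc 0 (t : ℝ) ∪ Ioi (t : ℝ) :=
    (Ioc_union_Ioi_eq_Ioi t.coe_nonneg).symm
  calc ∫⁻ x, {x | t < h x}.indicator h x ∂μ
      ≤ ∫⁻ s in Ioi (0 : ℝ), μ {x | ENNReal.ofReal s < {x | t < h x}.indicator h x} :=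
        lintegral_le_lintegral_measure_lt _
    _ ≤ (∫⁻ _ in Ioc (0 : ℝ) t, (W / t) ^ q) +
          ∫⁻ s in Ioi (t : ℝ), (W / t) ^ q * ENNReal.ofReal ((s / t) ^ (-q)) := by
        rw [hsplit]
        exact (lintegral_union_le _ _ _).trans <| add_le_add (lintegral_mono hlow)
          (setLIntegral_mono' measurableSet_Ioi hhigh)
    _ = ENNReal.ofReal (q / (q - 1)) * t * (W / t) ^ q := by
        have hq1 : 0 < q - 1 := by linarith
        rw [lintegral_const_mul _ (by fun_prop), lintegral_Ioi_rpow_neg hq (t := t) ht,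
          setLIntegral_const, volume_Ioc, sub_zero, ← mul_add,
          ← ENNReal.ofReal_add t.coe_nonneg (by positivity), mul_comm, ← ENNReal.ofReal_coe_nnreal,
          ← ENNReal.ofReal_mul (by positivity)]
        congr 2
        field_simp
        ring

end LayerCake

section MaximalFunction

variable {E : Type*} [NormedAddCommGroup E] [MeasurableSpace E] {μ : Measure E}

/-- The centred Hardy–Littlewood maximal function over open balls. It is applied to functions whose
measurability is unknown, so the averages are lower integrals. -/
def centeredMax (μ : Measure E) (h : E → ℝ≥0∞) (x : E) : ℝ≥0∞ :=
  ⨆ (ρ : ℝ) (_ : 0 < ρ), ⨍⁻ y in Metric.ball x ρ, h y ∂μ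

lemma lt_centeredMax_iff {h : E → ℝ≥0∞} {t : ℝ≥0∞} {x : E} :
    t < centeredMax μ h x ↔ ∃ ρ : ℝ, 0 < ρ ∧ t < ⨍⁻ y in Metric.ball x ρ, h y ∂μ := by
  simp only [centeredMax, lt_iSup_iff, exists_prop]

lemma mul_measure_ball_le_of_lt_laverage {h : E → ℝ≥0∞} {t : ℝ≥0∞} {x : E} {ρ : ℝ}
    (hlt : t < ⨍⁻ y in Metric.ball x ρ, h y ∂μ) :
    t * μ (Metric.ball x ρ) ≤ ∫⁻ y in Metric.ball x ρ, h y ∂μ := by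
  rw [setLAverage_eq] at hlt
  exact ENNReal.mul_le_of_le_div hlt.le

lemma mul_measure_lt_centeredMax_le_of_subsingleton [Subsingleton E] (h : E → ℝ≥0∞) (t : ℝ≥0∞) :
    t * μ {x | t < centeredMax μ h x} ≤ ∫⁻ y, h y ∂μ := by
  rcases eq_empty_or_nonempty {x | t < centeredMax μ h x} with hS | ⟨x, hx⟩
  · simp [hS]
  obtain ⟨ρ, hρ, hlt⟩ := lt_centeredMax_iff.1 hx
  calc t * μ {x | t < centeredMax μ h x}
      ≤ t * μ (Metric.ball x ρ) := by
        gcongr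
        exact fun y _ ↦ Subsingleton.elim x y ▸ Metric.mem_ball_self hρ
    _ ≤ ∫⁻ y, h y ∂μ :=
        (mul_measure_ball_le_of_lt_laverage hlt).trans (setLIntegral_le_lintegral _ _)

variable [NormedSpace ℝ E] [FiniteDimensional ℝ E] [μ.IsAddHaarMeasure]

lemma setLIntegral_ball_le_centeredMax_mul (h : E → ℝ≥0∞) (x : E) (ρ : ℝ) :
    ∫⁻ y in Metric.ball x ρ, h y ∂μ ≤ centeredMax μ h x * μ (Metric.ball x ρ) := by
  rcases le_or_gt ρ 0 with hρ | hρ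
  · simp [Metric.ball_eq_empty.2 hρ]
  rw [← ENNReal.div_le_iff (Metric.measure_ball_pos μ x hρ).ne' measure_ball_lt_top.ne,
    ← setLAverage_eq]
  exact le_iSup₂ (f := fun ρ (_ : 0 < ρ) ↦ ⨍⁻ y in Metric.ball x ρ, h y ∂μ) ρ hρ

lemma centeredMax_le_add_centeredMax_indicator (h : E → ℝ≥0∞) (t : ℝ≥0) (x : E) :
    centeredMax μ h x ≤ t + centeredMax μ ({y | t < h y}.indicator h) x := by
  refine iSup₂_le fun ρ hρ ↦ ?_
  have hpos := (Metric.measure_ball_pos μ x hρ).ne'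
  rw [setLAverage_eq, ENNReal.div_le_iff hpos measure_ball_lt_top.ne, add_mul]
  calc ∫⁻ y in Metric.ball x ρ, h y ∂μ
      ≤ ∫⁻ y in Metric.ball x ρ, (t + {y | t < h y}.indicator h y) ∂μ := by
        refine lintegral_mono fun y ↦ ?_
        by_cases hy : t < h y
        · simp [indicator_of_mem (mem_ofPred_eq ▸ hy : y ∈ {y | t < h y})]
        · exact (not_lt.1 hy).trans le_self_add
    _ = t * μ (Metric.ball x ρ) + ∫⁻ y in Metric.ball x ρ, {y | t < h y}.indicator h y ∂μ := by
        rw [lintegral_add_left measurable_const, setLIntegral_const]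
    _ ≤ _ := by gcongr; exact setLIntegral_ball_le_centeredMax_mul _ x ρ

variable [BorelSpace E]

lemma exists_radius_bound_of_measure_ball_le [Nontrivial E] {m : ℝ≥0∞} (hm : m ≠ ⊤) :
    ∃ R : ℝ, ∀ (x : E) (ρ : ℝ), μ (Metric.ball x ρ) ≤ m → ρ ≤ R := by
  have hV0 : μ (Metric.ball 0 1) ≠ 0 := (Metric.measure_ball_pos μ _ one_pos).ne'
  refine ⟨max 1 (m / μ (Metric.ball 0 1)).toReal, fun x ρ hρ ↦ ?_⟩
  refine le_max_iff.2 (or_iff_not_imp_left.2 fun h1 ↦ ?_)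
  rw [not_le] at h1
  have hpow : ENNReal.ofReal (ρ ^ Module.finrank ℝ E) ≤ m / μ (Metric.ball 0 1) := by
    rw [ENNReal.le_div_iff_mul_le (.inl hV0) (.inl measure_ball_lt_top.ne)]
    rwa [Measure.addHaar_ball μ x (by linarith)] at hρ
  exact (le_self_pow₀ h1.le Module.finrank_pos.ne').trans
    ((ENNReal.ofReal_le_iff_le_toReal (ENNReal.div_ne_top hm hV0)).1 hpow)

lemma measure_closedBall_five_mul (x : E) {ρ : ℝ} (hρ : 0 < ρ) :
    μ (Metric.closedBall x (5 * ρ)) = 5 ^ Module.finrank ℝ E * μ (Metric.ball x ρ) := by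
  rw [Measure.addHaar_closedBall μ x (by positivity), Measure.addHaar_ball_of_pos μ x hρ, mul_pow,
    ENNReal.ofReal_mul (by positivity), ENNReal.ofReal_pow (by norm_num), mul_assoc]
  simp

lemma exists_disjoint_balls_of_lt_centeredMax [Nontrivial E] {h : E → ℝ≥0∞}
    (hfin : ∫⁻ y, h y ∂μ ≠ ⊤) {t : ℝ≥0∞} (ht0 : t ≠ 0) (ht : t ≠ ⊤) :
    ∃ (u : Set E) (ρ : E → ℝ), u.Countable ∧
      (∀ x ∈ u, 0 < ρ x ∧ t < ⨍⁻ y in Metric.ball x (ρ x), h y ∂μ) ∧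
      (u.PairwiseDisjoint fun x ↦ Metric.ball x (ρ x)) ∧
      {x | t < centeredMax μ h x} ⊆ ⋃ x ∈ u, Metric.closedBall x (5 * ρ x) := by
  choose! ρ hρ using fun x (hx : x ∈ {x | t < centeredMax μ h x}) ↦ lt_centeredMax_iff.1 hx
  obtain ⟨R, hR⟩ := exists_radius_bound_of_measure_ball_le (μ := μ) (ENNReal.div_ne_top hfin ht0)
  have hρR (x) (hx : x ∈ {x | t < centeredMax μ h x}) : ρ x ≤ R := hR x (ρ x) <| by
    rw [ENNReal.le_div_iff_mul_le (.inl ht0) (.inl ht), mul_comm]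
    exact (mul_measure_ball_le_of_lt_laverage (hρ x hx).2).trans (setLIntegral_le_lintegral _ _)
  obtain ⟨u, hu, hdisj, hcover⟩ :=
    Vitali.exists_disjoint_subfamily_covering_enlargement_closedBall
      {x | t < centeredMax μ h x} id ρ R hρR 5 (by norm_num)
  have hdisj' : u.PairwiseDisjoint fun x ↦ Metric.ball x (ρ x) :=
    hdisj.mono fun x ↦ Metric.ball_subset_closedBall
  refine ⟨u, ρ, hdisj'.countable_of_isOpen (fun _ _ ↦ Metric.isOpen_ball)
    fun x hx ↦ ⟨x, Metric.mem_ball_self (hρ x (hu hx)).1⟩, fun x hx ↦ hρ x (hu hx), hdisj', ?_⟩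
  intro x hx
  obtain ⟨y, hy, hxy⟩ := hcover x hx
  exact mem_biUnion hy (hxy (Metric.mem_closedBall_self (hρ x hx).1.le))

theorem mul_measure_lt_centeredMax_le (h : E → ℝ≥0∞) {t : ℝ≥0∞} (ht0 : t ≠ 0) (ht : t ≠ ⊤) :
    t * μ {x | t < centeredMax μ h x} ≤ 5 ^ Module.finrank ℝ E * ∫⁻ y, h y ∂μ := by
  rcases eq_or_ne (∫⁻ y, h y ∂μ) ⊤ with hfin | hfin
  · simp [hfin, ENNReal.mul_top]
  rcases subsingleton_or_nontrivial E with hE | hE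
  · simpa [Module.finrank_zero_of_subsingleton] using
      mul_measure_lt_centeredMax_le_of_subsingleton h t
  obtain ⟨u, ρ, hcount, hρ, hdisj, hcover⟩ :=
    exists_disjoint_balls_of_lt_centeredMax hfin ht0 ht
  calc t * μ {x | t < centeredMax μ h x}
      ≤ t * ∑' x : u, μ (Metric.closedBall x (5 * ρ x)) := by
        gcongr
        exact (measure_mono hcover).trans (measure_biUnion_le μ hcount _)
    _ ≤ ∑' x : u, 5 ^ Module.finrank ℝ E * ∫⁻ y in Metric.ball x (ρ x), h y ∂μ := by
        rw [← ENNReal.tsum_mul_left]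
        refine ENNReal.tsum_le_tsum fun x ↦ ?_
        rw [measure_closedBall_five_mul x.1 (hρ x x.2).1, mul_left_comm]
        gcongr
        exact mul_measure_ball_le_of_lt_laverage (hρ x x.2).2
    _ = 5 ^ Module.finrank ℝ E * ∫⁻ y in ⋃ x ∈ u, Metric.ball x (ρ x), h y ∂μ := by
        rw [ENNReal.tsum_mul_left,
          lintegral_biUnion hcount (fun _ _ ↦ measurableSet_ball) hdisj]
    _ ≤ 5 ^ Module.finrank ℝ E * ∫⁻ y, h y ∂μ :=
        mul_le_mul_right (setLIntegral_le_lintegral _ _) _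

theorem measure_lt_centeredMax_le_of_measure_lt_le {h : E → ℝ≥0∞} {q : ℝ} (hq : 1 < q) {W : ℝ≥0∞}
    (hW : ∀ s : ℝ≥0, 0 < s → μ {x | s < h x} ≤ (W / s) ^ q) {t : ℝ≥0} (ht : 0 < t) :
    μ {x | (t + t : ℝ≥0) < centeredMax μ h x} ≤
      5 ^ Module.finrank ℝ E * ENNReal.ofReal (q / (q - 1)) * (W / t) ^ q := by
  have ht0 : (t : ℝ≥0∞) ≠ 0 := by exact_mod_cast ht.ne'
  rw [← ENNReal.mul_le_mul_iff_right ht0 ENNReal.coe_ne_top]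
  calc t * μ {x | (t + t : ℝ≥0) < centeredMax μ h x}
      ≤ t * μ {x | t < centeredMax μ ({y | t < h y}.indicator h) x} := by
        refine mul_le_mul_right (measure_mono fun x hx ↦ ?_) _
        rw [mem_ofPred_eq, ENNReal.coe_add] at hx
        exact lt_of_add_lt_add_left (hx.trans_le (centeredMax_le_add_centeredMax_indicator h t x))
    _ ≤ 5 ^ Module.finrank ℝ E * (ENNReal.ofReal (q / (q - 1)) * t * (W / t) ^ q) := by
        grw [mul_measure_lt_centeredMax_le _ ht0 ENNReal.coe_ne_top,
          lintegral_indicator_lt_le_of_measure_lt_le hq hW ht]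
    _ = _ := by ring

end MaximalFunction

theorem weakNorm_centeredMax_le {n : ℕ} {μ : Measure (Euc n)} [μ.IsAddHaarMeasure] {q : ℝ}
    (hq : 1 < q) (h : Euc n → ℝ≥0∞) :
    weakNorm μ q (centeredMax μ h) ≤
      2 * (5 ^ n * ENNReal.ofReal (q / (q - 1))) ^ (1 / q) * weakNorm μ q h := by
  have hq0 : 0 < q := by linarith
  refine weakNorm_le_iff.2 fun lam hlam ↦ ?_
  have hlam0 : (lam : ℝ≥0∞) ≠ 0 := by exact_mod_cast hlam.ne'
  have hmain := measure_lt_centeredMax_le_of_measure_lt_le (μ := μ) hq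
    (fun s hs ↦ measure_lt_le_weakNorm_div_rpow (g := h) hq0 hs) (half_pos hlam)
  rw [add_halves, finrank_euclideanSpace_fin] at hmain
  have hdiv : weakNorm μ q h / (lam / 2 : ℝ≥0) = weakNorm μ q h * 2 / lam := by
    rw [ENNReal.coe_div two_ne_zero, ENNReal.coe_ofNat, div_eq_mul_inv,
      ENNReal.inv_div (.inl ENNReal.ofNat_ne_top) (.inl two_ne_zero), mul_div_assoc]
  calc lam * μ {x | lam < centeredMax μ h x} ^ (1 / q)
      ≤ lam * (5 ^ n * ENNReal.ofReal (q / (q - 1)) *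
          (weakNorm μ q h / (lam / 2 : ℝ≥0)) ^ q) ^ (1 / q) := by gcongr
    _ = lam * ((5 ^ n * ENNReal.ofReal (q / (q - 1))) ^ (1 / q) *
          (weakNorm μ q h * 2 / lam)) := by
        rw [ENNReal.mul_rpow_of_nonneg _ _ (by positivity), one_div, ENNReal.rpow_rpow_inv hq0.ne',
          hdiv]
    _ = 2 * (5 ^ n * ENNReal.ofReal (q / (q - 1))) ^ (1 / q) * weakNorm μ q h := by
        rw [mul_left_comm, ENNReal.mul_div_cancel hlam0 ENNReal.coe_ne_top]
        ring

lemma setOf_lt_one_add_norm_rpow_neg {E : Type*} [NormedAddCommGroup E]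
    [NormedSpace ℝ E] {s t τ : ℝ} (hs : 0 < s) (ht : 0 < t) (hτ : 0 < τ) (x : E) :
    {y | τ < (1 + ‖t⁻¹ • (x - y)‖) ^ (-s)} = Metric.ball x (t * (τ ^ (-s)⁻¹ - 1)) := by
  ext y
  rw [mem_ofPred_eq, ← lt_rpow_inv_iff_of_neg (by positivity) hτ (neg_lt_zero.2 hs),
    mem_ball_iff_norm', norm_smul, norm_inv, norm_of_nonneg ht.le, ← lt_sub_iff_add_lt',
    inv_mul_lt_iff₀ ht]

section RadialDomination

variable {E : Type*} [NormedAddCommGroup E] [NormedSpace ℝ E] [FiniteDimensional ℝ E]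
  [MeasurableSpace E] [BorelSpace E] {μ : Measure E} [μ.IsAddHaarMeasure]

lemma lintegral_comp_sub_smul (H : E → ℝ≥0∞) (x : E) {t : ℝ} (ht : 0 < t) :
    ∫⁻ u, H (x - t • u) ∂μ = ENNReal.ofReal (t ^ Module.finrank ℝ E)⁻¹ * ∫⁻ y, H y ∂μ := by
  rw [← (measurableEmbedding_const_smul₀ ht.ne').lintegral_map (fun v ↦ H (x - v)),
    Measure.map_addHaar_smul μ ht.ne', lintegral_smul_measure, abs_of_pos (by positivity),
    lintegral_sub_left_eq_self H x, smul_eq_mul]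

lemma lintegral_ofReal_mul_le_centeredMax_mul {w : E → ℝ} (hw0 : ∀ y, 0 ≤ w y)
    (hwm : Measurable w) {x : E} (hball : ∀ τ, 0 < τ → ∃ ρ, {y | τ < w y} = Metric.ball x ρ)
    (h : E → ℝ≥0∞) :
    ∫⁻ y, ENNReal.ofReal (w y) * h y ∂μ ≤
      centeredMax μ h x * ∫⁻ y, ENNReal.ofReal (w y) ∂μ := by
  have hwm' : Measurable fun y ↦ ENNReal.ofReal (w y) := hwm.ennreal_ofReal
  obtain ⟨g, hg, hgh, hint⟩ :=
    exists_measurable_le_lintegral_eq (μ.withDensity fun y ↦ ENNReal.ofReal (w y)) h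
  have hdensity (k : E → ℝ≥0∞) : ∫⁻ y, k y ∂μ.withDensity (fun y ↦ ENNReal.ofReal (w y)) =
      ∫⁻ y, ENNReal.ofReal (w y) * k y ∂μ :=
    lintegral_withDensity_eq_lintegral_mul_non_measurable μ hwm'
      (.of_forall fun _ ↦ ENNReal.ofReal_lt_top) k
  calc ∫⁻ y, ENNReal.ofReal (w y) * h y ∂μ
      = ∫⁻ y, ENNReal.ofReal (w y) ∂μ.withDensity g := by
        rw [← hdensity h, hint, hdensity g, lintegral_withDensity_eq_lintegral_mul μ hg hwm']
        simp only [Pi.mul_apply, mul_comm]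
    _ = ∫⁻ τ in Ioi 0, μ.withDensity g {y | τ < w y} :=
        lintegral_eq_lintegral_meas_lt _ (.of_forall hw0) hwm.aemeasurable
    _ ≤ ∫⁻ τ in Ioi 0, centeredMax μ h x * μ {y | τ < w y} := by
        refine setLIntegral_mono' measurableSet_Ioi fun τ hτ ↦ ?_
        obtain ⟨ρ, hρ⟩ := hball τ hτ
        rw [hρ, withDensity_apply _ measurableSet_ball]
        exact (lintegral_mono hgh).trans (setLIntegral_ball_le_centeredMax_mul h x ρ)
    _ = centeredMax μ h x * ∫⁻ y, ENNReal.ofReal (w y) ∂μ := by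
        have hanti : Antitone fun τ ↦ μ {y | τ < w y} :=
          fun τ τ' hτ ↦ measure_mono fun y hy ↦ hτ.trans_lt hy
        rw [lintegral_const_mul _ hanti.measurable,
          lintegral_eq_lintegral_meas_lt _ (.of_forall hw0) hwm.aemeasurable]

theorem lintegral_one_add_norm_rpow_mul_le_centeredMax {s : ℝ} (hs : 0 < s) (h : E → ℝ≥0∞) (x : E)
    {t : ℝ} (ht : 0 < t) :
    ∫⁻ u, ENNReal.ofReal ((1 + ‖u‖) ^ (-s)) * h (x - t • u) ∂μ ≤
      centeredMax μ h x * ∫⁻ u, ENNReal.ofReal ((1 + ‖u‖) ^ (-s)) ∂μ := by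
  have hsub (u : E) : t⁻¹ • (x - (x - t • u)) = u := by
    rw [sub_sub_cancel, inv_smul_smul₀ ht.ne']
  have hw := lintegral_comp_sub_smul (μ := μ)
    (fun y ↦ ENNReal.ofReal ((1 + ‖t⁻¹ • (x - y)‖) ^ (-s))) x ht
  have hwh := lintegral_comp_sub_smul (μ := μ)
    (fun y ↦ ENNReal.ofReal ((1 + ‖t⁻¹ • (x - y)‖) ^ (-s)) * h y) x ht
  simp only [hsub] at hw hwh
  rw [hw, hwh, mul_left_comm]
  gcongr
  exact lintegral_ofReal_mul_le_centeredMax_mul (fun y ↦ by positivity) (by fun_prop)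
    (fun τ hτ ↦ ⟨_, setOf_lt_one_add_norm_rpow_neg hs ht hτ x⟩) h

end RadialDomination

/-! ### Decaying kernels and the grand maximal function -/

section DerivDecay

open scoped ContDiff SchwartzMap

variable {E F : Type*} [NormedAddCommGroup E] [NormedAddCommGroup F]

lemma one_add_norm_add_le_mul (x y : E) : 1 + ‖x + y‖ ≤ (1 + ‖x‖) * (1 + ‖y‖) := by
  nlinarith [norm_add_le x y, norm_nonneg x, norm_nonneg y]

/-- Peetre's inequality. -/
lemma one_add_norm_add_rpow_neg_le (x y : E) {M : ℝ} (hM : 0 ≤ M) :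
    (1 + ‖x + y‖) ^ (-M) ≤ (1 + ‖y‖) ^ M * (1 + ‖x‖) ^ (-M) := by
  have hx := one_add_norm_add_le_mul (x + y) (-y)
  rw [add_neg_cancel_right, norm_neg] at hx
  rw [rpow_neg (by positivity), rpow_neg (by positivity), ← div_eq_mul_inv,
    le_div_iff₀ (by positivity), inv_mul_le_iff₀ (by positivity),
    ← mul_rpow (by positivity) (by positivity)]
  exact rpow_le_rpow (by positivity) hx hM

variable [NormedSpace ℝ E] [NormedSpace ℝ F]

lemma norm_iteratedFDeriv_smul_le_of_forall_le {f : E → ℝ} {g : E → F} (hf : ContDiff ℝ ∞ f)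
    (hg : ContDiff ℝ ∞ g) {j : ℕ} {v : E} {a b : ℝ} (ha : ∀ i ≤ j, ‖iteratedFDeriv ℝ i f v‖ ≤ a)
    (hb : ∀ i ≤ j, ‖iteratedFDeriv ℝ i g v‖ ≤ b) :
    ‖iteratedFDeriv ℝ j (fun v ↦ f v • g v) v‖ ≤ 2 ^ j * (a * b) := by
  have ha0 : 0 ≤ a := (norm_nonneg _).trans (ha 0 j.zero_le)
  calc ‖iteratedFDeriv ℝ j (fun v ↦ f v • g v) v‖
      ≤ ∑ i ∈ Finset.range (j + 1), (j.choose i : ℝ) * ‖iteratedFDeriv ℝ i f v‖ *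
          ‖iteratedFDeriv ℝ (j - i) g v‖ :=
        norm_iteratedFDeriv_smul_le hf hg v (by exact_mod_cast le_top)
    _ ≤ ∑ i ∈ Finset.range (j + 1), (j.choose i : ℝ) * a * b := by
        gcongr with i hi
        · exact ha i (by grind)
        · exact hb (j - i) (by omega)
    _ = 2 ^ j * (a * b) := by
        rw [← Finset.sum_mul, ← Finset.sum_mul, ← Nat.cast_sum, Nat.sum_range_choose]
        push_cast
        ring

/-- `K` is smooth and each of its derivatives is `O((1 + ‖x‖) ^ (-M))`. -/
structure HasDerivDecay (M : ℝ) (K : E → F) : Prop where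
  contDiff : ContDiff ℝ ∞ K
  exists_norm_iteratedFDeriv_le (j : ℕ) :
    ∃ C, 0 ≤ C ∧ ∀ x, ‖iteratedFDeriv ℝ j K x‖ ≤ C * (1 + ‖x‖) ^ (-M)

lemma hasDerivDecay_of_subsingleton [Subsingleton E] (M : ℝ) (K : E → F) : HasDerivDecay M K where
  contDiff := by
    rw [show K = fun _ ↦ K 0 from funext fun x ↦ congrArg K (Subsingleton.elim x 0)]
    exact contDiff_const
  exists_norm_iteratedFDeriv_le j := by
    refine ⟨‖iteratedFDeriv ℝ j K 0‖, norm_nonneg _, fun x ↦ ?_⟩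
    simp [Subsingleton.elim x 0]

lemma hasDerivDecay_schwartzMap (Φ : 𝓢(E, F)) (M : ℝ) : HasDerivDecay M Φ where
  contDiff := Φ.smooth ⊤
  exists_norm_iteratedFDeriv_le j := by
    obtain ⟨k, hk⟩ := exists_nat_ge M
    refine ⟨2 ^ k * ((Finset.Iic (k, j)).sup fun m ↦ SchwartzMap.seminorm ℝ m.1 m.2) Φ,
      by positivity, fun x ↦ ?_⟩
    rw [rpow_neg (by positivity), ← div_eq_mul_inv, le_div_iff₀ (by positivity), mul_comm]
    refine le_trans ?_ (SchwartzMap.one_add_le_sup_seminorm_apply (𝕜 := ℝ) (m := (k, j))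
      le_rfl le_rfl Φ x)
    gcongr
    rw [← rpow_natCast]
    exact rpow_le_rpow_of_exponent_le (by linarith [norm_nonneg x]) hk

namespace HasDerivDecay

variable {K : E → F} {M : ℝ}

lemma exists_forall_norm_iteratedFDeriv_le (hK : HasDerivDecay M K) (k : ℕ) :
    ∃ C, 0 ≤ C ∧ ∀ j ≤ k, ∀ x, ‖iteratedFDeriv ℝ j K x‖ ≤ C * (1 + ‖x‖) ^ (-M) := by
  choose C hC hb using hK.exists_norm_iteratedFDeriv_le
  refine ⟨∑ j ∈ Finset.range (k + 1), C j, Finset.sum_nonneg fun j _ ↦ hC j, fun j hj x ↦ ?_⟩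
  grw [hb j x, Finset.single_le_sum (f := C) (fun j _ ↦ hC j) (Finset.mem_range_succ_iff.2 hj)]

lemma exists_norm_iteratedFDeriv_smul_shift_le (hK : HasDerivDecay M K) (hM : 0 ≤ M) {L : ℝ}
    (hL : 0 ≤ L) {η : E → ℝ} (hη : HasDerivDecay (L + M) η) {ρ : ℝ} (hρ : 0 ≤ ρ)
    (k : ℕ) :
    ∃ A, 0 ≤ A ∧ ∀ a : E, ‖a‖ ≤ ρ → ∀ w, ∀ j ≤ k, ∀ v,
      (1 + ‖v‖) ^ L * ‖iteratedFDeriv ℝ j (fun v ↦ η (v + a) • K (v + w)) v‖ ≤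
        A * (1 + ‖w‖) ^ (-M) := by
  obtain ⟨B, hB, hηB⟩ := hη.exists_forall_norm_iteratedFDeriv_le k
  obtain ⟨C, hC, hKC⟩ := hK.exists_forall_norm_iteratedFDeriv_le k
  refine ⟨2 ^ k * (B * (1 + ρ) ^ (L + M) * C), by positivity, fun a ha w j hj v ↦ ?_⟩
  have hηv (i : ℕ) (hi : i ≤ k) : ‖iteratedFDeriv ℝ i (fun v ↦ η (v + a)) v‖ ≤
      B * ((1 + ρ) ^ (L + M) * (1 + ‖v‖) ^ (-(L + M))) := by
    rw [iteratedFDeriv_comp_add_right]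
    grw [hηB i hi, one_add_norm_add_rpow_neg_le v a (by positivity), ha]
  have hKv (i : ℕ) (hi : i ≤ k) : ‖iteratedFDeriv ℝ i (fun v ↦ K (v + w)) v‖ ≤
      C * ((1 + ‖v‖) ^ M * (1 + ‖w‖) ^ (-M)) := by
    rw [iteratedFDeriv_comp_add_right]
    grw [hKC i hi, add_comm v, one_add_norm_add_rpow_neg_le w v hM]
  have hv : (1 + ‖v‖) ^ L * ((1 + ‖v‖) ^ (-(L + M)) * (1 + ‖v‖) ^ M) = 1 := by
    rw [← rpow_add (by positivity), ← rpow_add (by positivity)]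
    ring_nf
    exact rpow_zero _
  have h_leibniz := norm_iteratedFDeriv_smul_le_of_forall_le (hη.contDiff.comp (by fun_prop))
    (hK.contDiff.comp (by fun_prop)) (fun i hi ↦ hηv i (hi.trans hj)) fun i hi ↦ hKv i (hi.trans hj)
  calc (1 + ‖v‖) ^ L * ‖iteratedFDeriv ℝ j (fun v ↦ η (v + a) • K (v + w)) v‖
      ≤ (1 + ‖v‖) ^ L * (2 ^ j * (B * ((1 + ρ) ^ (L + M) * (1 + ‖v‖) ^ (-(L + M))) *
          (C * ((1 + ‖v‖) ^ M * (1 + ‖w‖) ^ (-M))))) := by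
        gcongr
        exact h_leibniz
    _ = 2 ^ j * (B * (1 + ρ) ^ (L + M) * C) * (1 + ‖w‖) ^ (-M) *
          ((1 + ‖v‖) ^ L * ((1 + ‖v‖) ^ (-(L + M)) * (1 + ‖v‖) ^ M)) := by
        ring
    _ ≤ 2 ^ k * (B * (1 + ρ) ^ (L + M) * C) * (1 + ‖w‖) ^ (-M) := by
        rw [hv, mul_one]
        gcongr
        norm_num

end HasDerivDecay

end DerivDecay

section TestFunctions

open scoped ContDiff SchwartzMap

variable {n : ℕ} {g : Euc n → ℂ}

lemma contDiff_pderiv' (i : Fin n) (hg : ContDiff ℝ ∞ g) : ContDiff ℝ ∞ (pderiv' i g) :=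
  (hg.fderiv_right (m := ∞) (by simp)).clm_apply contDiff_const

lemma norm_iteratedFDeriv_pderiv'_le (i : Fin n) (hg : ContDiff ℝ ∞ g) (j : ℕ) (x : Euc n) :
    ‖iteratedFDeriv ℝ j (pderiv' i g) x‖ ≤ ‖iteratedFDeriv ℝ (j + 1) g x‖ := by
  have hg' : ContDiff ℝ ∞ (fderiv ℝ g) := hg.fderiv_right (by simp)
  change ‖iteratedFDeriv ℝ j (fun y ↦ fderiv ℝ g y (EuclideanSpace.single i 1)) x‖ ≤ _
  simpa [norm_iteratedFDeriv_fderiv] using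
    norm_iteratedFDeriv_clm_apply_const hg'.contDiffAt (x := x) (n := j)
      (c := EuclideanSpace.single i (1 : ℝ)) (by exact_mod_cast le_top)

lemma contDiff_iterate_pderiv' (i : Fin n) (a : ℕ) (hg : ContDiff ℝ ∞ g) :
    ContDiff ℝ ∞ ((pderiv' i)^[a] g) :=
  Function.Iterate.rec (ContDiff ℝ ∞) hg (fun _ ↦ contDiff_pderiv' i) a

lemma norm_iteratedFDeriv_iterate_pderiv'_le (i : Fin n) (a : ℕ) (hg : ContDiff ℝ ∞ g) (j : ℕ)
    (x : Euc n) :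
    ‖iteratedFDeriv ℝ j ((pderiv' i)^[a] g) x‖ ≤ ‖iteratedFDeriv ℝ (j + a) g x‖ := by
  induction a generalizing j with
  | zero => rfl
  | succ a ih =>
    rw [Function.iterate_succ_apply', add_comm a 1, ← add_assoc]
    exact (norm_iteratedFDeriv_pderiv'_le i (contDiff_iterate_pderiv' i a hg) j x).trans
      (ih (j + 1))

lemma contDiff_foldr_iterate_pderiv' (α : Fin n → ℕ) (hg : ContDiff ℝ ∞ g) (l : List (Fin n)) :
    ContDiff ℝ ∞ ((l.map fun i ↦ (pderiv' i)^[α i]).foldr (· ∘ ·) id g) := by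
  induction l with
  | nil => exact hg
  | cons i l ih => exact contDiff_iterate_pderiv' i (α i) ih

lemma norm_iteratedFDeriv_foldr_iterate_pderiv'_le (α : Fin n → ℕ) (hg : ContDiff ℝ ∞ g)
    (l : List (Fin n)) (j : ℕ) (x : Euc n) :
    ‖iteratedFDeriv ℝ j ((l.map fun i ↦ (pderiv' i)^[α i]).foldr (· ∘ ·) id g) x‖ ≤
      ‖iteratedFDeriv ℝ (j + (l.map α).sum) g x‖ := by
  induction l generalizing j with
  | nil => rfl
  | cons i l ih =>
    rw [List.map_cons, List.map_cons, List.sum_cons, ← add_assoc]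
    exact (norm_iteratedFDeriv_iterate_pderiv'_le i (α i)
      (contDiff_foldr_iterate_pderiv' α hg l) j x).trans (ih (j + α i))

lemma norm_mderiv_le (α : Fin n → ℕ) (hg : ContDiff ℝ ∞ g) (x : Euc n) :
    ‖mderiv α g x‖ ≤ ‖iteratedFDeriv ℝ (∑ i, α i) g x‖ := by
  have h_sum : ((List.finRange n).map α).sum = ∑ i, α i := by
    rw [← List.ofFn_eq_map, List.sum_ofFn]
  rw [← norm_iteratedFDeriv_zero (𝕜 := ℝ), ← h_sum, ← zero_add (List.sum _)]
  exact norm_iteratedFDeriv_foldr_iterate_pderiv'_le α hg (List.finRange n) 0 x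

lemma enorm_integral_dil_mul_le_grandMax {N : ℕ} {φ : 𝓢(Euc n, ℂ)} (hφ : inTestClass N φ)
    (f : Euc n → ℂ) (x : Euc n) {t : ℝ} (ht : 0 < t) :
    ‖∫ y, dil φ t (x - y) * f y‖ₑ ≤ grandMax N f x :=
  le_iSup₂_of_le φ hφ (le_iSup₂_of_le t ht le_rfl)

lemma dil_smul (c : ℝ) (g : Euc n → ℂ) (t : ℝ) (x : Euc n) : dil (c • g) t x = c • dil g t x :=
  smul_comm (t ^ n)⁻¹ c (g (t⁻¹ • x))

lemma enorm_integral_dil_mul_le_mul_grandMax {N : ℕ} {ψ : 𝓢(Euc n, ℂ)} {κ : ℝ} (hκ : 0 < κ)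
    (hψ : ∀ j ≤ N + 1, ∀ v, (1 + ‖v‖) ^ (N + n + 1) * ‖iteratedFDeriv ℝ j ψ v‖ ≤ κ)
    (f : Euc n → ℂ) (x : Euc n) {t : ℝ} (ht : 0 < t) :
    ‖∫ y, dil ψ t (x - y) * f y‖ₑ ≤ ENNReal.ofReal κ * grandMax N f x := by
  have h_test : inTestClass N (κ⁻¹ • ψ) := fun v α hα ↦ by
    grw [norm_mderiv_le α ((κ⁻¹ • ψ).smooth ⊤)]
    rw [FunLike.coe_smul, iteratedFDeriv_const_smul_apply (ψ.smooth _).contDiffAt, norm_smul,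
      Real.norm_of_nonneg (by positivity), mul_left_comm, inv_mul_le_iff₀ hκ, mul_one]
    exact hψ _ hα v
  calc ‖∫ y, dil ψ t (x - y) * f y‖ₑ
      = ‖κ • ∫ y, dil (κ⁻¹ • ψ : 𝓢(Euc n, ℂ)) t (x - y) * f y‖ₑ := by
        simp_rw [FunLike.coe_smul, dil_smul, smul_mul_assoc, integral_smul,
          smul_inv_smul₀ hκ.ne']
    _ = ENNReal.ofReal κ * ‖∫ y, dil (κ⁻¹ • ψ : 𝓢(Euc n, ℂ)) t (x - y) * f y‖ₑ := by
        rw [enorm_smul, Real.enorm_of_nonneg hκ.le]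
    _ ≤ ENNReal.ofReal κ * grandMax N f x := by
        gcongr
        exact enorm_integral_dil_mul_le_grandMax h_test f x ht

/-- The product `v ↦ η (v + a) • K (v + w)` as a Schwartz function. -/
def HasDerivDecay.smulShift {K : Euc n → ℂ} {M : ℝ} (hK : HasDerivDecay M K) (hM : 0 ≤ M)
    (η : 𝓢(Euc n, ℝ)) (a w : Euc n) : 𝓢(Euc n, ℂ) where
  toFun v := η (v + a) • K (v + w)
  smooth' := ((η.smooth ⊤).comp (by fun_prop)).smul (hK.contDiff.comp (by fun_prop))
  decay' k j := by
    obtain ⟨A, -, hb⟩ := hK.exists_norm_iteratedFDeriv_smul_shift_le hM (L := k) (by positivity)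
      (hasDerivDecay_schwartzMap η _) (norm_nonneg a) j
    refine ⟨A * (1 + ‖w‖) ^ (-M), fun v ↦ le_trans ?_ (hb a le_rfl w j le_rfl v)⟩
    rw [rpow_natCast]
    gcongr
    linarith

lemma HasDerivDecay.exists_enorm_integral_dil_smul_shift_le {K : Euc n → ℂ} {M : ℝ}
    (hK : HasDerivDecay M K) (hM : 0 ≤ M) (η : 𝓢(Euc n, ℝ)) {ρ : ℝ} (hρ : 0 ≤ ρ) (N : ℕ) :
    ∃ A : ℝ≥0, ∀ (f : Euc n → ℂ) (x : Euc n) (t : ℝ), 0 < t → ∀ a : Euc n, ‖a‖ ≤ ρ → ∀ w,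
      ‖∫ y, dil (fun v ↦ η (v + a) • K (v + w)) t (x - y) * f y‖ₑ ≤
        A * ENNReal.ofReal ((1 + ‖w‖) ^ (-M)) * grandMax N f x := by
  obtain ⟨A, hA, hb⟩ := hK.exists_norm_iteratedFDeriv_smul_shift_le hM
    (L := (N + n + 1 : ℕ)) (by positivity) (hasDerivDecay_schwartzMap η _) hρ (N + 1)
  refine ⟨(A + 1).toNNReal, fun f x t ht a ha w ↦ ?_⟩
  let ψ := hK.smulShift hM η a w
  have h_bound : ∀ j ≤ N + 1, ∀ v, (1 + ‖v‖) ^ (N + n + 1) * ‖iteratedFDeriv ℝ j ψ v‖ ≤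
      (A + 1) * (1 + ‖w‖) ^ (-M) := fun j hj v ↦ by
    have := hb a ha w j hj v
    rw [rpow_natCast] at this
    exact this.trans (by gcongr; linarith)
  refine (enorm_integral_dil_mul_le_mul_grandMax (by positivity) h_bound f x ht).trans_eq ?_
  rw [ENNReal.ofReal_mul (by positivity), ENNReal.ofReal]

end TestFunctions

section LatticePartition

open scoped ContDiff SchwartzMap

/-- The one-dimensional profile whose integer translates form a smooth partition of unity. -/
def intBump (s : ℝ) : ℝ := smoothTransition (s + 1) - smoothTransition s

lemma intBump_nonneg (s : ℝ) : 0 ≤ intBump s :=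
  sub_nonneg.2 (smoothTransition.monotone (by linarith))

lemma intBump_eq_zero {s : ℝ} (hs : 1 ≤ |s|) : intBump s = 0 := by
  rcases le_abs.1 hs with h | h
  · rw [intBump, smoothTransition.one_of_one_le (by linarith),
      smoothTransition.one_of_one_le (by linarith), sub_self]
  · rw [intBump, smoothTransition.zero_of_nonpos (by linarith),
      smoothTransition.zero_of_nonpos (by linarith), sub_self]

lemma intBump_sub_floor_add (s : ℝ) : intBump (s - ⌊s⌋) + intBump (s - (⌊s⌋ + 1 : ℤ)) = 1 := by
  have h0 := Int.floor_le s
  have h1 := Int.lt_floor_add_one s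
  push_cast
  rw [intBump, intBump, smoothTransition.one_of_one_le (by linarith),
    smoothTransition.zero_of_nonpos (x := s - (⌊s⌋ + 1)) (by linarith)]
  ring_nf

lemma intBump_sub_intCast_eq_zero {s : ℝ} {c : ℤ} (h : c ≠ ⌊s⌋) (h' : c ≠ ⌊s⌋ + 1) :
    intBump (s - c) = 0 := by
  refine intBump_eq_zero ?_
  by_contra! hc
  obtain ⟨h1, h2⟩ := abs_lt.1 hc
  have h_lt : (c : ℝ) < (⌊s⌋ + 2 : ℤ) := by push_cast; linarith [Int.lt_floor_add_one s]
  have h_gt : (⌊s⌋ : ℝ) < (c + 1 : ℤ) := by push_cast; linarith [Int.floor_le s]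
  rw [Int.cast_lt] at h_lt h_gt
  omega

variable {n : ℕ}

/-- The point of the integer lattice of `ℝⁿ` with coordinates `c`. -/
def latticePoint (c : Fin n → ℤ) : Euc n := WithLp.toLp 2 fun i ↦ (c i : ℝ)

lemma norm_le_of_abs_apply_le_one {u : Euc n} (hu : ∀ i, |u i| ≤ 1) : ‖u‖ ≤ n := by
  refine le_of_sq_le_sq ?_ n.cast_nonneg
  calc ‖u‖ ^ 2 = ∑ i, u i ^ 2 := EuclideanSpace.real_norm_sq_eq u
    _ ≤ ∑ _ : Fin n, (1 : ℝ) := Finset.sum_le_sum fun i _ ↦ (sq_le_one_iff_abs_le_one _).2 (hu i)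
    _ ≤ (n : ℝ) ^ 2 := by
      simpa using (by exact_mod_cast Nat.le_self_pow two_ne_zero n : (n : ℝ) ≤ (n : ℝ) ^ 2)

lemma contDiff_prod_intBump : ContDiff ℝ ∞ fun u : Euc n ↦ ∏ i, intBump (u i) :=
  contDiff_prod fun i _ ↦ (smoothTransition.contDiff.comp (by fun_prop)).sub
    (smoothTransition.contDiff.comp (by fun_prop))

lemma hasCompactSupport_prod_intBump : HasCompactSupport fun u : Euc n ↦ ∏ i, intBump (u i) := by
  refine .of_support_subset_isCompact (isCompact_closedBall 0 (n : ℝ)) fun u hu ↦ ?_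
  rw [mem_closedBall_zero_iff]
  refine norm_le_of_abs_apply_le_one fun i ↦ ?_
  by_contra! h
  exact hu (Finset.prod_eq_zero (Finset.mem_univ i) (intBump_eq_zero h.le))

/-- The tensor power of `intBump`; its lattice translates form a partition of unity of `ℝⁿ`. -/
def latticeBump (n : ℕ) : 𝓢(Euc n, ℝ) :=
  (hasCompactSupport_prod_intBump (n := n)).toSchwartzMap contDiff_prod_intBump

lemma latticeBump_apply (u : Euc n) : latticeBump n u = ∏ i, intBump (u i) := rfl

lemma latticeBump_nonneg (u : Euc n) : 0 ≤ latticeBump n u := by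
  rw [latticeBump_apply]
  exact Finset.prod_nonneg fun i _ ↦ intBump_nonneg (u i)

lemma hasSum_latticeBump_sub_latticePoint (u : Euc n) :
    HasSum (fun c ↦ latticeBump n (u - latticePoint c)) 1 := by
  have h_sum : ∑ c ∈ Fintype.piFinset fun i ↦ {⌊u i⌋, ⌊u i⌋ + 1},
      latticeBump n (u - latticePoint c) = 1 := by
    simp only [latticeBump_apply, latticePoint, PiLp.sub_apply]
    rw [← Finset.prod_univ_sum (f := fun i c ↦ intBump (u i - (c : ℤ)))]
    exact Finset.prod_eq_one fun i _ ↦ by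
      rw [Finset.sum_pair (by simp), intBump_sub_floor_add]
  refine h_sum ▸ hasSum_sum_of_ne_finset_zero fun c hc ↦ ?_
  obtain ⟨i, hi⟩ : ∃ i, ¬ (c i = ⌊u i⌋ ∨ c i = ⌊u i⌋ + 1) := by simpa using hc
  rw [not_or] at hi
  exact Finset.prod_eq_zero (Finset.mem_univ i) (intBump_sub_intCast_eq_zero hi.1 hi.2)

lemma norm_sub_latticePoint_floor_le (u : Euc n) :
    ‖u - latticePoint fun i ↦ ⌊u i⌋‖ ≤ n := by
  refine norm_le_of_abs_apply_le_one fun i ↦ ?_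
  change |Int.fract (u i)| ≤ 1
  rw [Int.abs_fract]
  exact (Int.fract_lt_one _).le

lemma map_floor_volume :
    (volume : Measure (Euc n)).map (fun u i ↦ ⌊u i⌋) = Measure.count := by
  refine Measure.ext_of_singleton fun c ↦ ?_
  have h_cell : (fun (u : Euc n) i ↦ ⌊u i⌋) ⁻¹' {c} =
      WithLp.ofLp ⁻¹' Set.pi univ fun i ↦ Ico (c i : ℝ) (c i + 1) := by
    ext u
    simp [funext_iff, Int.floor_eq_iff]
  rw [Measure.map_apply (by fun_prop) (measurableSet_singleton c), Measure.count_singleton, h_cell,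
    (PiLp.volume_preserving_ofLp (Fin n)).measure_preimage
      (MeasurableSet.univ_pi fun i ↦ measurableSet_Ico).nullMeasurableSet, Real.volume_pi_Ico]
  simp

lemma tsum_eq_lintegral_floor (a : (Fin n → ℤ) → ℝ≥0∞) :
    ∑' c, a c = ∫⁻ u : Euc n, a fun i ↦ ⌊u i⌋ := by
  rw [← lintegral_count, ← map_floor_volume,
    lintegral_map (Measurable.of_discrete) (by fun_prop)]

end LatticePartition

section PartitionOfUnity

variable {α ι E : Type*} [MeasurableSpace α] {μ : Measure α} [Countable ι]
  [NormedAddCommGroup E] [NormedSpace ℝ E]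

lemma enorm_integral_le_tsum_enorm_integral_smul {χ : ι → α → ℝ}
    (hχ : ∀ i, AEStronglyMeasurable (χ i) μ) (hχ_nonneg : ∀ i x, 0 ≤ χ i x)
    (hχ_sum : ∀ x, HasSum (χ · x) 1) (g : α → E) :
    ‖∫ x, g x ∂μ‖ₑ ≤ ∑' i, ‖∫ x, χ i x • g x ∂μ‖ₑ := by
  by_cases hg : Integrable g μ
  swap
  · simp [integral_undef hg]
  have h_meas (i : ι) : AEStronglyMeasurable (fun x ↦ χ i x • g x) μ :=
    (hχ i).smul hg.aestronglyMeasurable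
  have h_tsum (x : α) : ∑' i, χ i x • g x = g x := by
    rw [((hχ_sum x).smul_const (g x)).tsum_eq, one_smul]
  have h_enorm (x : α) : ∑' i, ‖χ i x • g x‖ₑ = ‖g x‖ₑ := by
    simp_rw [enorm_smul, ENNReal.tsum_mul_right, Real.enorm_of_nonneg (hχ_nonneg _ x)]
    rw [← ENNReal.ofReal_tsum_of_nonneg (hχ_nonneg · x) (hχ_sum x).summable, (hχ_sum x).tsum_eq,
      ENNReal.ofReal_one, one_mul]
  have h_fin : ∑' i, ∫⁻ x, ‖χ i x • g x‖ₑ ∂μ ≠ ∞ := by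
    rw [← lintegral_tsum fun i ↦ (h_meas i).enorm]
    simpa only [h_enorm] using hg.2.ne
  calc ‖∫ x, g x ∂μ‖ₑ = ‖∑' i, ∫ x, χ i x • g x ∂μ‖ₑ := by
        simp_rw [← integral_tsum h_meas h_fin, h_tsum]
    _ ≤ ∑' i, ‖∫ x, χ i x • g x ∂μ‖ₑ := enorm_tsum_le_tsum_enorm

lemma tsum_rpow_le_tsum_rpow {ι : Type*} (a : ι → ℝ≥0∞) {r : ℝ} (hr : 0 < r) (hr1 : r ≤ 1) :
    (∑' i, a i) ^ r ≤ ∑' i, a i ^ r := by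
  have h_fin (s : Finset ι) : (∑ i ∈ s, a i) ^ r ≤ ∑ i ∈ s, a i ^ r :=
    Finset.le_sum_of_subadditive (· ^ r) (ENNReal.zero_rpow_of_pos hr).le
      (fun _ _ ↦ ENNReal.rpow_add_le_add_rpow _ _ hr.le hr1) s a
  have h_lim := ((ENNReal.continuous_rpow_const (y := r)).tendsto _).comp
    (ENNReal.summable (f := a)).hasSum
  exact le_of_tendsto' h_lim fun s ↦ (h_fin s).trans (ENNReal.sum_le_tsum s)

end PartitionOfUnity

section MaximalDomination

variable {n : ℕ} {K : Euc n → ℂ} {M : ℝ}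

lemma HasDerivDecay.exists_enorm_integral_latticeBump_smul_le (hK : HasDerivDecay M K) (hM : 0 ≤ M)
    (N : ℕ) : ∃ A : ℝ≥0, ∀ (f : Euc n → ℂ) (x : Euc n) (t : ℝ), 0 < t → ∀ u : Euc n,
      ‖∫ y, latticeBump n (t⁻¹ • (x - y) - latticePoint fun i ↦ ⌊u i⌋) •
          (dil K t (x - y) * f y)‖ₑ ≤
        A * ENNReal.ofReal ((1 + ‖u‖) ^ (-M)) * grandMax N f (x - t • u) := by
  obtain ⟨A, hA⟩ := hK.exists_enorm_integral_dil_smul_shift_le hM (latticeBump n) n.cast_nonneg N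
  refine ⟨A, fun f x t ht u ↦ ?_⟩
  convert hA f (x - t • u) t ht _ (norm_sub_latticePoint_floor_le u) u using 4 with y
  have h_shift : t⁻¹ • (x - t • u - y) + u = t⁻¹ • (x - y) := by
    rw [sub_right_comm, smul_sub, inv_smul_smul₀ ht.ne', sub_add_cancel]
  rw [dil, dil, ← add_sub_assoc, h_shift, smul_comm, smul_mul_assoc,
    smul_mul_assoc, smul_mul_assoc]

lemma HasDerivDecay.exists_enorm_integral_dil_rpow_le (hK : HasDerivDecay M K) {r : ℝ} (hr : 0 < r)
    (hr1 : r ≤ 1) (hM : n < r * M) (N : ℕ) :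
    ∃ A : ℝ≥0, ∀ (f : Euc n → ℂ) (x : Euc n) (t : ℝ), 0 < t →
      ‖∫ y, dil K t (x - y) * f y‖ₑ ^ r ≤
        A * centeredMax volume (fun z ↦ grandMax N f z ^ r) x := by
  have hM0 : 0 < M := pos_of_mul_pos_right (n.cast_nonneg.trans_lt hM) hr.le
  obtain ⟨A, hA⟩ := hK.exists_enorm_integral_latticeBump_smul_le hM0.le N
  have h_fin : ∫⁻ u : Euc n, ENNReal.ofReal ((1 + ‖u‖) ^ (-(r * M))) ≠ ∞ :=
    (finite_integral_one_add_norm (by simpa using hM)).ne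
  set I := ∫⁻ u : Euc n, ENNReal.ofReal ((1 + ‖u‖) ^ (-(r * M)))
  refine ⟨A ^ r * I.toNNReal, fun f x t ht ↦ ?_⟩
  set g : Euc n → ℂ := fun y ↦ dil K t (x - y) * f y
  set χ : (Fin n → ℤ) → Euc n → ℝ := fun c y ↦ latticeBump n (t⁻¹ • (x - y) - latticePoint c)
  have h_kernel (u : Euc n) :
      (A * ENNReal.ofReal ((1 + ‖u‖) ^ (-M)) * grandMax N f (x - t • u)) ^ r =
        A ^ r * (ENNReal.ofReal ((1 + ‖u‖) ^ (-(r * M))) * grandMax N f (x - t • u) ^ r) := by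
    rw [ENNReal.mul_rpow_of_nonneg _ _ hr.le, ENNReal.mul_rpow_of_nonneg _ _ hr.le,
      ENNReal.ofReal_rpow_of_nonneg (by positivity) hr.le, ← rpow_mul (by positivity), mul_assoc,
      neg_mul, mul_comm M]
  calc ‖∫ y, g y‖ₑ ^ r
      ≤ (∑' c, ‖∫ y, χ c y • g y‖ₑ) ^ r := by
        gcongr
        exact enorm_integral_le_tsum_enorm_integral_smul
          (fun c ↦ ((latticeBump n).continuous.comp (by fun_prop)).aestronglyMeasurable)
          (fun _ _ ↦ latticeBump_nonneg _) (fun _ ↦ hasSum_latticeBump_sub_latticePoint _) g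
    _ ≤ ∫⁻ u : Euc n, ‖∫ y, χ (fun i ↦ ⌊u i⌋) y • g y‖ₑ ^ r :=
        (tsum_rpow_le_tsum_rpow _ hr hr1).trans_eq (tsum_eq_lintegral_floor _)
    _ ≤ ∫⁻ u, A ^ r * (ENNReal.ofReal ((1 + ‖u‖) ^ (-(r * M))) * grandMax N f (x - t • u) ^ r) :=
        lintegral_mono fun u ↦ h_kernel u ▸ ENNReal.rpow_le_rpow (hA f x t ht u) hr.le
    _ ≤ A ^ r * (centeredMax volume (fun z ↦ grandMax N f z ^ r) x * I) := by
        rw [lintegral_const_mul' _ _ (by finiteness)]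
        gcongr
        exact lintegral_one_add_norm_rpow_mul_le_centeredMax (n.cast_nonneg.trans_lt hM)
          (fun z ↦ grandMax N f z ^ r) x ht
    _ = ↑(A ^ r * I.toNNReal) * centeredMax volume (fun z ↦ grandMax N f z ^ r) x := by
        rw [ENNReal.coe_mul, ENNReal.coe_toNNReal h_fin, ENNReal.coe_rpow_of_nonneg _ hr.le]
        ring

end MaximalDomination

/-! ### The Bochner–Riesz kernel -/

section OscillatoryIntegral

/-- The extension of `s ↦ (1 - s²) ^ a * exp (2πits)` to the strip `|Re z| ≤ 1`, holomorphic in its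
interior. -/
def oscIntegrand (a t : ℝ) (z : ℂ) : ℂ :=
  (1 - z) ^ (a : ℂ) * (1 + z) ^ (a : ℂ) * cexp (2 * π * I * t * z)

variable {a t : ℝ}

lemma norm_oscIntegrand (z : ℂ) :
    ‖oscIntegrand a t z‖ = ‖1 - z‖ ^ a * ‖1 + z‖ ^ a * Real.exp (-(2 * π * t) * z.im) := by
  simp [oscIntegrand, Complex.norm_exp, Complex.norm_cpow_real]

lemma oscIntegrand_ofReal {s : ℝ} (hs : s ∈ Icc (-1) 1) :
    oscIntegrand a t s = ((1 - s ^ 2) ^ a : ℝ) * cexp (2 * π * I * t * s) := by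
  have h_sub : 0 ≤ 1 - s := by linarith [hs.2]
  have h_add : 0 ≤ 1 + s := by linarith [hs.1]
  rw [show 1 - s ^ 2 = (1 - s) * (1 + s) by ring, mul_rpow h_sub h_add]
  push_cast [oscIntegrand, Complex.ofReal_cpow h_sub, Complex.ofReal_cpow h_add]
  rfl

lemma continuousAt_cpow_const_of_re_nonneg (ha : 0 < a) {w : ℂ} (hw : 0 ≤ w.re) :
    ContinuousAt (fun z : ℂ ↦ z ^ (a : ℂ)) w := by
  rcases eq_or_ne w 0 with rfl | h0
  · exact (Complex.continuousAt_cpow_zero_of_re_pos (z := a) (by simpa using ha)).comp₂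
      continuousAt_id continuousAt_const
  · refine continuousAt_cpow_const (hw.lt_or_eq.imp_right fun h h' ↦ h0 ?_)
    exact Complex.ext h.symm h'

lemma continuousAt_oscIntegrand (ha : 0 < a) {z : ℂ} (hz : z.re ∈ Icc (-1) 1) :
    ContinuousAt (oscIntegrand a t) z := by
  have h_sub : ContinuousAt (fun z : ℂ ↦ (1 - z) ^ (a : ℂ)) z :=
    ContinuousAt.comp (f := fun z ↦ 1 - z) (g := (· ^ (a : ℂ)))
      (continuousAt_cpow_const_of_re_nonneg ha (by simpa using hz.2)) (by fun_prop)
  have h_add : ContinuousAt (fun z : ℂ ↦ (1 + z) ^ (a : ℂ)) z :=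
    ContinuousAt.comp (f := fun z ↦ 1 + z) (g := (· ^ (a : ℂ)))
      (continuousAt_cpow_const_of_re_nonneg ha (by simpa using neg_le_iff_add_nonneg'.1 hz.1))
      (by fun_prop)
  exact (h_sub.mul h_add).mul (by fun_prop)

lemma differentiableAt_oscIntegrand {z : ℂ} (hz : z.re ∈ Ioo (-1) 1) :
    DifferentiableAt ℂ (oscIntegrand a t) z := by
  have h_sub : 1 - z ∈ slitPlane := Or.inl (by simpa using hz.2)
  have h_add : 1 + z ∈ slitPlane := Or.inl (by simpa using neg_lt_iff_pos_add'.1 hz.1)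
  exact ((DifferentiableAt.cpow_const (by fun_prop) h_sub).mul
    (DifferentiableAt.cpow_const (by fun_prop) h_add)).mul (by fun_prop)

lemma integral_oscIntegrand_eq (ha : 0 < a) :
    ∫ s in (-1 : ℝ)..1, oscIntegrand a t s = (∫ x in (-1 : ℝ)..1, oscIntegrand a t (x + I)) -
      I * (∫ y in (0 : ℝ)..1, oscIntegrand a t (1 + y * I)) +
        I * ∫ y in (0 : ℝ)..1, oscIntegrand a t (-1 + y * I) := by
  have h_rect := Complex.integral_boundary_rect_eq_zero_of_continuousOn_of_differentiableOn
    (oscIntegrand a t) (-1) (1 + I)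
    (fun z hz ↦ (continuousAt_oscIntegrand ha
      (by simpa [uIcc_of_le] using hz.1)).continuousWithinAt)
    (fun z hz ↦ (differentiableAt_oscIntegrand (by simpa using hz.1)).differentiableWithinAt)
  simp only [Complex.add_re, Complex.neg_re, Complex.one_re, Complex.I_re, Complex.add_im,
    Complex.neg_im, Complex.one_im, Complex.I_im, smul_eq_mul, neg_zero, add_zero, zero_add,
    Complex.ofReal_zero, zero_mul, Complex.ofReal_one, one_mul, Complex.ofReal_neg] at h_rect
  linear_combination h_rect

lemma norm_one_add_le_three {z : ℂ} (hre : |z.re| ≤ 1) (him : |z.im| ≤ 1) : ‖1 + z‖ ≤ 3 := by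
  linarith [norm_add_le 1 z, norm_one (α := ℂ), z.norm_le_abs_re_add_abs_im]

lemma norm_one_sub_le_three {z : ℂ} (hre : |z.re| ≤ 1) (him : |z.im| ≤ 1) : ‖1 - z‖ ≤ 3 := by
  simpa [sub_eq_add_neg] using norm_one_add_le_three (z := -z) (by simpa) (by simpa)

lemma exp_neg_le_rpow_mul_rpow_neg {b t : ℝ} (hb : 0 < b) (ht : 0 < t) :
    Real.exp (-t) ≤ b ^ b * t ^ (-b) := by
  have h_div : t / b ≤ Real.exp (t / b) := by linarith [Real.add_one_le_exp (t / b)]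
  have h_pow : t ^ b ≤ b ^ b * Real.exp t := by
    calc t ^ b ≤ (b * Real.exp (t / b)) ^ b :=
          rpow_le_rpow ht.le ((div_le_iff₀' hb).1 h_div) hb.le
      _ = b ^ b * Real.exp t := by
          rw [mul_rpow hb.le (Real.exp_nonneg _), ← Real.exp_mul, div_mul_cancel₀ _ hb.ne']
  rwa [Real.exp_neg, rpow_neg ht.le, ← div_eq_mul_inv, inv_le_comm₀ (Real.exp_pos _)
    (by positivity), inv_div, div_le_iff₀' (by positivity)]

lemma norm_integral_oscIntegrand_add_I_le (ha : 0 < a) (ht : 0 < t) :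
    ‖∫ x in (-1 : ℝ)..1, oscIntegrand a t (x + I)‖ ≤
      3 ^ a * 3 ^ a * (a + 1) ^ (a + 1) * t ^ (-(a + 1)) * |1 - (-1)| := by
  refine intervalIntegral.norm_integral_le_of_norm_le_const fun x hx ↦ ?_
  rw [uIoc_of_le (by norm_num)] at hx
  have h_re : |((x : ℂ) + I).re| ≤ 1 := by simpa using abs_le.2 ⟨hx.1.le, hx.2⟩
  have h_im : |((x : ℂ) + I).im| ≤ 1 := by simp
  have h_exp : Real.exp (-(2 * π * t) * ((x : ℂ) + I).im) ≤
      (a + 1) ^ (a + 1) * t ^ (-(a + 1)) := by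
    refine le_trans ?_ (exp_neg_le_rpow_mul_rpow_neg (by linarith) ht)
    gcongr
    simp
    nlinarith [Real.pi_gt_three]
  rw [norm_oscIntegrand, mul_assoc (3 ^ a * 3 ^ a)]
  gcongr
  · exact norm_one_sub_le_three h_re h_im
  · exact norm_one_add_le_three h_re h_im

lemma intervalIntegral_rpow_mul_exp_neg_mul_le {r : ℝ} (ha : 0 < a) (hr : 0 < r) :
    ∫ y in (0 : ℝ)..1, y ^ a * Real.exp (-(r * y)) ≤ (1 / r) ^ (a + 1) * Real.Gamma (a + 1) := by
  have h_int : IntegrableOn (fun y : ℝ ↦ y ^ a * Real.exp (-(r * y))) (Ioi 0) := by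
    simpa using integrableOn_rpow_mul_exp_neg_mul_rpow (p := 1) (by linarith) one_pos hr
  rw [intervalIntegral.integral_of_le zero_le_one]
  refine (setIntegral_mono_set h_int ?_ Ioc_subset_Ioi_self.eventuallyLE).trans_eq ?_
  · filter_upwards [ae_restrict_mem measurableSet_Ioi] with y hy
    have := mem_Ioi.1 hy
    positivity
  · simpa using Real.integral_rpow_mul_exp_neg_mul_Ioi (a := a + 1) (by linarith) hr

lemma norm_I_mul_integral_le_of_norm_le (ha : 0 < a) (ht : 0 < t) {G : ℝ → ℂ}
    (hG : ∀ y ∈ Ioc (0 : ℝ) 1, ‖G y‖ ≤ 3 ^ a * (y ^ a * Real.exp (-(2 * π * t * y)))) :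
    ‖I * ∫ y in (0 : ℝ)..1, G y‖ ≤
      3 ^ a * ((1 / (2 * π)) ^ (a + 1) * Real.Gamma (a + 1)) * t ^ (-(a + 1)) := by
  have h_cont : Continuous fun y : ℝ ↦ 3 ^ a * (y ^ a * Real.exp (-(2 * π * t * y))) := by
    have := continuous_rpow_const ha.le
    fun_prop
  rw [norm_mul, Complex.norm_I, one_mul]
  calc ‖∫ y in (0 : ℝ)..1, G y‖
      ≤ ∫ y in (0 : ℝ)..1, 3 ^ a * (y ^ a * Real.exp (-(2 * π * t * y))) :=
        intervalIntegral.norm_integral_le_of_norm_le zero_le_one (.of_forall hG)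
          (h_cont.intervalIntegrable 0 1)
    _ ≤ 3 ^ a * ((1 / (2 * π * t)) ^ (a + 1) * Real.Gamma (a + 1)) := by
        rw [intervalIntegral.integral_const_mul]
        gcongr
        exact intervalIntegral_rpow_mul_exp_neg_mul_le ha (by positivity)
    _ = 3 ^ a * ((1 / (2 * π)) ^ (a + 1) * Real.Gamma (a + 1)) * t ^ (-(a + 1)) := by
        rw [← div_div, div_rpow (by positivity) ht.le, rpow_neg ht.le]
        ring

lemma norm_oscIntegrand_one_add_le (ha : 0 < a) {y : ℝ} (hy : y ∈ Ioc 0 1) :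
    ‖oscIntegrand a t (1 + y * I)‖ ≤ 3 ^ a * (y ^ a * Real.exp (-(2 * π * t * y))) := by
  have h_add := norm_one_add_le_three (z := 1 + y * I) (by simp)
    (by simpa [abs_of_pos hy.1] using hy.2)
  have h_sub : ‖1 - (1 + y * I)‖ = y := by simp [abs_of_pos hy.1]
  have := hy.1
  rw [norm_oscIntegrand, h_sub, mul_comm (y ^ a), mul_assoc]
  gcongr
  simp

lemma norm_oscIntegrand_neg_one_add_le (ha : 0 < a) {y : ℝ} (hy : y ∈ Ioc 0 1) :
    ‖oscIntegrand a t (-1 + y * I)‖ ≤ 3 ^ a * (y ^ a * Real.exp (-(2 * π * t * y))) := by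
  have h_sub := norm_one_sub_le_three (z := -1 + y * I) (by simp)
    (by simpa [abs_of_pos hy.1] using hy.2)
  have h_add : ‖1 + (-1 + y * I)‖ = y := by simp [abs_of_pos hy.1]
  have := hy.1
  rw [norm_oscIntegrand, h_add, mul_assoc]
  gcongr
  simp

/-- The segment `[-1, 1]` is replaced by the other three sides of the rectangle with corners `-1`
and `1 + i`: the exponential is small on the top side, and the zeros of order `a` at `±1` give the
decay of the contribution of the vertical sides. -/
lemma exists_norm_integral_one_sub_sq_rpow_mul_cexp_le (ha : 0 < a) :
    ∃ C, 0 ≤ C ∧ ∀ t : ℝ, 0 < t →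
      ‖∫ s in (-1 : ℝ)..1, ((1 - s ^ 2) ^ a : ℝ) * cexp (2 * π * I * t * s)‖ ≤
        C * t ^ (-(a + 1)) := by
  set B := 3 ^ a * ((1 / (2 * π)) ^ (a + 1) * Real.Gamma (a + 1))
  have : 0 ≤ B := by positivity [Real.Gamma_pos_of_pos (by linarith : 0 < a + 1)]
  refine ⟨3 ^ a * 3 ^ a * (a + 1) ^ (a + 1) * 2 + B + B, by positivity, fun t ht ↦ ?_⟩
  have h_top := norm_integral_oscIntegrand_add_I_le ha ht
  have h_right := norm_I_mul_integral_le_of_norm_le ha ht fun y hy ↦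
    norm_oscIntegrand_one_add_le ha hy
  have h_left := norm_I_mul_integral_le_of_norm_le ha ht fun y hy ↦
    norm_oscIntegrand_neg_one_add_le ha hy
  have h_eq : ∫ s in (-1 : ℝ)..1, ((1 - s ^ 2) ^ a : ℝ) * cexp (2 * π * I * t * s) =
      ∫ s in (-1 : ℝ)..1, oscIntegrand a t s :=
    intervalIntegral.integral_congr fun s hs ↦
      (oscIntegrand_ofReal (by rwa [uIcc_of_le (by norm_num)] at hs)).symm
  rw [h_eq, integral_oscIntegrand_eq ha]
  rw [show |(1 : ℝ) - -1| = 2 by norm_num] at h_top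
  calc _ ≤ 3 ^ a * 3 ^ a * (a + 1) ^ (a + 1) * t ^ (-(a + 1)) * 2 + B * t ^ (-(a + 1)) +
        B * t ^ (-(a + 1)) :=
        norm_add_le_of_le (norm_sub_le_of_le h_top h_right) h_left
    _ = _ := by ring

end OscillatoryIntegral

section FourierTransform

open scoped RealInnerProductSpace

variable {V F : Type*} [NormedAddCommGroup V] [InnerProductSpace ℝ V] [FiniteDimensional ℝ V]
  [MeasurableSpace V] [BorelSpace V] [NormedAddCommGroup F] [NormedSpace ℂ F]

lemma fourierInv_eq_of_norm_eq {f : V → F} (hf : ∀ ξ η, ‖ξ‖ = ‖η‖ → f ξ = f η) {x y : V}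
    (hxy : ‖x‖ = ‖y‖) : 𝓕⁻ f x = 𝓕⁻ f y := by
  set U := (ℝ ∙ (x - y))ᗮ.reflection
  have h_map : U x = y := Submodule.reflection_sub hxy
  have h_comp : f ∘ U = f := funext fun ξ ↦ hf _ _ (U.norm_map ξ)
  rw [← h_map, ← Real.fourierInv_comp_linearIsometry, h_comp]

lemma norm_fourierInv_le_integral_norm (f : V → F) (x : V) : ‖𝓕⁻ f x‖ ≤ ∫ ξ, ‖f ξ‖ := by
  rw [Real.fourierInv_eq]
  exact (norm_integral_le_integral_norm _).trans_eq (by simp)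

lemma continuous_fourierInv_of_integrable {f : V → F} (hf : Integrable f) : Continuous (𝓕⁻ f) :=
  VectorFourier.fourierIntegral_continuous Real.continuous_fourierChar
    (by simpa using! continuous_inner.neg) hf

lemma fourierInv_comp_sub_left (g : V → F) (x ξ : V) :
    𝓕⁻ (fun y ↦ g (x - y)) ξ = 𝐞 ⟪ξ, x⟫ • 𝓕 g ξ := by
  rw [Real.fourierInv_eq, Real.fourier_eq, ← integral_sub_left_eq_self _ volume x,
    Circle.smul_def, ← integral_smul]
  refine integral_congr_ae (.of_forall fun y ↦ ?_)
  simp only [sub_sub_cancel]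
  rw [← Circle.smul_def, smul_smul, ← AddChar.map_add_eq_mul, inner_sub_left, real_inner_comm ξ x,
    sub_eq_add_neg]

lemma fourierInv_smul_fourier [CompleteSpace F] {f : V → ℂ} {g : V → F} (hf : Integrable f)
    (hg : Integrable g) (x : V) :
    𝓕⁻ (fun ξ ↦ f ξ • 𝓕 g ξ) x = ∫ y, 𝓕⁻ f y • g (x - y) := by
  have h_flip := VectorFourier.integral_fourierIntegral_smul_eq_flip (μ := volume) (ν := volume)
    (L := -innerₗ V) Real.continuous_fourierChar (by simpa using! continuous_inner.neg) hf
    (hg.comp_sub_left x)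
  refine Eq.trans ?_ h_flip.symm
  rw [Real.fourierInv_eq]
  refine integral_congr_ae (.of_forall fun ξ ↦ ?_)
  have h_inv : VectorFourier.fourierIntegral 𝐞 volume (-innerₗ V).flip (fun y ↦ g (x - y)) ξ =
      𝓕⁻ (fun y ↦ g (x - y)) ξ := by
    rw [Real.fourierInv_eq]
    simp [VectorFourier.fourierIntegral, real_inner_comm]
  simp only
  rw [h_inv, fourierInv_comp_sub_left, smul_comm]

end FourierTransform

section FourierSlice

variable {k : ℕ}

/-- The identification of `ℝ × ℝᵏ` with `ℝᵏ⁺¹` which prepends a coordinate. -/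
def consEuc (k : ℕ) : ℝ × Euc k ≃ᵐ Euc (k + 1) :=
  ((MeasurableEquiv.refl ℝ).prodCongr (MeasurableEquiv.toLp 2 (Fin k → ℝ)).symm).trans
    ((MeasurableEquiv.piFinSuccAbove (fun _ ↦ ℝ) 0).symm.trans (MeasurableEquiv.toLp 2 _))

lemma measurePreserving_consEuc : MeasurePreserving (consEuc k) :=
  (PiLp.volume_preserving_toLp (Fin (k + 1))).comp
    ((volume_preserving_piFinSuccAbove (fun _ ↦ ℝ) 0).symm.comp
      ((MeasurePreserving.id volume).prod (PiLp.volume_preserving_ofLp (Fin k))))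

@[simp]
lemma consEuc_zero (q : ℝ × Euc k) : consEuc k q 0 = q.1 := by
  simp [consEuc, MeasurableEquiv.piFinSuccAbove, MeasurableEquiv.prodCongr]

lemma norm_consEuc_sq (q : ℝ × Euc k) : ‖consEuc k q‖ ^ 2 = q.1 ^ 2 + ‖q.2‖ ^ 2 := by
  simp [EuclideanSpace.real_norm_sq_eq, Fin.sum_univ_succ, consEuc, MeasurableEquiv.piFinSuccAbove,
    MeasurableEquiv.prodCongr]

lemma fourierInv_single_zero {f : Euc (k + 1) → ℂ} (hf : Integrable f) (t : ℝ) :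
    𝓕⁻ f (EuclideanSpace.single 0 t) =
      ∫ s : ℝ, cexp (2 * π * I * t * s) * ∫ v, f (consEuc k (s, v)) := by
  have h_int : Integrable fun ξ : Euc (k + 1) ↦ cexp (2 * π * I * t * ξ 0) * f ξ := by
    refine hf.bdd_mul (c := 1) (by fun_prop) (.of_forall fun ξ ↦ ?_)
    simp [Complex.norm_exp]
  calc 𝓕⁻ f (EuclideanSpace.single 0 t)
      = ∫ ξ : Euc (k + 1), cexp (2 * π * I * t * ξ 0) * f ξ := by
        rw [Real.fourierInv_eq']
        refine integral_congr_ae (.of_forall fun ξ ↦ ?_)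
        simp only [EuclideanSpace.inner_single_right, smul_eq_mul, conj_trivial]
        push_cast
        ring_nf
    _ = ∫ q : ℝ × Euc k, cexp (2 * π * I * t * q.1) * f (consEuc k q) := by
        simpa using (measurePreserving_consEuc.integral_comp
          (consEuc k).measurableEmbedding (fun ξ ↦ cexp (2 * π * I * t * ξ 0) * f ξ)).symm
    _ = ∫ s : ℝ, cexp (2 * π * I * t * s) * ∫ v, f (consEuc k (s, v)) := by
        rw [Measure.volume_eq_prod, integral_prod]
        · simp only [integral_const_mul]
        · simpa using! (measurePreserving_consEuc.integrable_comp_emb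
            (consEuc k).measurableEmbedding).2 h_int

end FourierSlice

section BochnerRieszKernel

section Multiplier

variable {V : Type*} [NormedAddCommGroup V]

/-- The Bochner-Riesz multiplier `ξ ↦ (1 - |ξ|²)₊^δ`, on any normed group. -/
def brMultiplier (δ : ℝ) (ξ : V) : ℂ := (((1 - ‖ξ‖ ^ 2) ⊔ 0) ^ δ : ℝ)

lemma brMultiplier_eq_zero {δ : ℝ} (hδ : 0 < δ) {ξ : V} (hξ : 1 ≤ ‖ξ‖) :
    brMultiplier δ ξ = 0 := by
  rw [brMultiplier, max_eq_right (by nlinarith), zero_rpow hδ.ne', Complex.ofReal_zero]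

lemma continuous_brMultiplier {δ : ℝ} (hδ : 0 < δ) : Continuous (brMultiplier (V := V) δ) := by
  have := continuous_rpow_const hδ.le
  unfold brMultiplier
  fun_prop

lemma integrable_brMultiplier [ProperSpace V] [MeasurableSpace V] [BorelSpace V] {μ : Measure V}
    [IsFiniteMeasureOnCompacts μ] {δ : ℝ} (hδ : 0 < δ) : Integrable (brMultiplier δ) μ := by
  refine (continuous_brMultiplier hδ).integrable_of_hasCompactSupport
    (.intro (isCompact_closedBall (0 : V) 1) fun ξ hξ ↦ brMultiplier_eq_zero hδ ?_)
  simpa using (not_le.1 (mt mem_closedBall_zero_iff.2 hξ)).le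

lemma integral_sub_sq_sup_zero_rpow [NormedSpace ℝ V] [FiniteDimensional ℝ V] [MeasurableSpace V]
    [BorelSpace V] (μ : Measure V) [μ.IsAddHaarMeasure] {δ : ℝ} (hδ : 0 < δ) (b : ℝ) :
    ∫ v, ((b - ‖v‖ ^ 2) ⊔ 0) ^ δ ∂μ =
      (b ⊔ 0) ^ (δ + Module.finrank ℝ V / 2) * ∫ v, ((1 - ‖v‖ ^ 2) ⊔ 0) ^ δ ∂μ := by
  rcases le_or_gt b 0 with hb | hb
  · have h_zero (v : V) : (b - ‖v‖ ^ 2) ⊔ 0 = 0 := max_eq_right (by nlinarith [sq_nonneg ‖v‖])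
    simp [h_zero, max_eq_right hb, zero_rpow hδ.ne', zero_rpow (by positivity :
      δ + (Module.finrank ℝ V : ℝ) / 2 ≠ 0)]
  · have h_scale (v : V) : ((b - ‖√b • v‖ ^ 2) ⊔ 0) ^ δ = b ^ δ * ((1 - ‖v‖ ^ 2) ⊔ 0) ^ δ := by
      rw [← mul_rpow hb.le le_sup_right, mul_max_of_nonneg _ _ hb.le, norm_smul, mul_pow,
        norm_of_nonneg (sqrt_nonneg b), sq_sqrt hb.le, mul_sub, mul_one, mul_zero]
    have h_comp := μ.integral_comp_smul_of_nonneg (fun v ↦ ((b - ‖v‖ ^ 2) ⊔ 0) ^ δ) √b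
      (hR := sqrt_nonneg b)
    have h_pow : b ^ ((Module.finrank ℝ V : ℝ) / 2) = √b ^ Module.finrank ℝ V := by
      rw [sqrt_eq_rpow, ← rpow_mul_natCast hb.le, one_div_mul_eq_div]
    simp only [h_scale, integral_const_mul, smul_eq_mul] at h_comp
    rw [max_eq_left hb.le, rpow_add hb, h_pow]
    rw [inv_mul_eq_div, eq_div_iff (by positivity)] at h_comp
    linear_combination -h_comp

end Multiplier

lemma integral_sup_zero_rpow_mul {δ : ℝ} (hδ : 0 < δ) (g : ℝ → ℂ) :
    ∫ s : ℝ, (((1 - s ^ 2) ⊔ 0) ^ δ : ℝ) * g s =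
      ∫ s in (-1 : ℝ)..1, ((1 - s ^ 2) ^ δ : ℝ) * g s := by
  rw [intervalIntegral.integral_of_le (by norm_num), ← integral_indicator measurableSet_Ioc]
  refine integral_congr_ae (.of_forall fun s ↦ ?_)
  by_cases hs : s ∈ Ioc (-1 : ℝ) 1
  · simp [indicator_of_mem hs, max_eq_left (by nlinarith [hs.1, hs.2] : 0 ≤ 1 - s ^ 2)]
  · have h_neg : 1 - s ^ 2 ≤ 0 := by
      rcases not_and_or.1 hs with h | h <;> nlinarith
    simp [indicator_of_notMem hs, max_eq_right h_neg, zero_rpow hδ.ne']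

lemma brKernel_single_zero (k : ℕ) {δ : ℝ} (hδ : 0 < δ) (t : ℝ) :
    brKernel (k + 1) δ (EuclideanSpace.single 0 t) =
      (∫ s in (-1 : ℝ)..1, ((1 - s ^ 2) ^ (δ + k / 2) : ℝ) * cexp (2 * π * I * t * s)) *
        ∫ v : Euc k, brMultiplier δ v := by
  have h_slice (s : ℝ) : ∫ v, brMultiplier δ (consEuc k (s, v)) =
      (((1 - s ^ 2) ⊔ 0) ^ (δ + k / 2) : ℝ) * ∫ v : Euc k, brMultiplier δ v := by
    simp only [brMultiplier, norm_consEuc_sq, ← sub_sub, integral_complex_ofReal]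
    rw [integral_sub_sq_sup_zero_rpow volume hδ (1 - s ^ 2)]
    simp
  calc brKernel (k + 1) δ (EuclideanSpace.single 0 t)
      = ∫ s : ℝ, cexp (2 * π * I * t * s) * ∫ v, brMultiplier δ (consEuc k (s, v)) :=
        fourierInv_single_zero (integrable_brMultiplier hδ) t
    _ = (∫ s : ℝ, (((1 - s ^ 2) ⊔ 0) ^ (δ + k / 2) : ℝ) * cexp (2 * π * I * t * s)) *
          ∫ v : Euc k, brMultiplier δ v := by
        simp only [h_slice]
        rw [← integral_mul_const]
        congr with s
        ring
    _ = _ := by rw [integral_sup_zero_rpow_mul (by positivity)]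

lemma le_mul_one_add_rpow_neg {u t A B M : ℝ} (ht : 0 ≤ t) (hM : 0 ≤ M) (hA : 0 ≤ A) (hB : 0 ≤ B)
    (huA : u ≤ A) (huB : 0 < t → u ≤ B * t ^ (-M)) :
    u ≤ 2 ^ M * (A + B) * (1 + t) ^ (-M) := by
  have h_half {s : ℝ} (hs : 0 < s) (hts : 1 + t ≤ 2 * s) : s ^ (-M) ≤ 2 ^ M * (1 + t) ^ (-M) := by
    rw [rpow_neg hs.le, rpow_neg (by positivity), ← div_eq_mul_inv, le_div_iff₀ (by positivity),
      inv_mul_le_iff₀ (by positivity), mul_comm, ← mul_rpow (by positivity) hs.le]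
    exact rpow_le_rpow (by positivity) hts hM
  rcases le_or_gt t 1 with h1 | h1
  · have := h_half one_pos (by linarith)
    rw [one_rpow] at this
    calc u ≤ (A + B) * 1 := by linarith
      _ ≤ (A + B) * (2 ^ M * (1 + t) ^ (-M)) := by gcongr
      _ = _ := by ring
  · have ht0 : 0 < t := by linarith
    calc u ≤ (A + B) * t ^ (-M) := by grw [huB ht0]; gcongr; linarith
      _ ≤ (A + B) * (2 ^ M * (1 + t) ^ (-M)) := by gcongr; exact h_half ht0 (by linarith)
      _ = _ := by ring

lemma exists_norm_brKernel_le {n : ℕ} (hn : 0 < n) {δ : ℝ} (hδ : 0 < δ) :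
    ∃ C, ∀ x, ‖brKernel n δ x‖ ≤ C * (1 + ‖x‖) ^ (-(δ + (n + 1) / 2)) := by
  obtain ⟨k, rfl⟩ := Nat.exists_eq_add_one_of_ne_zero hn.ne'
  obtain ⟨B, hB, h_osc⟩ := exists_norm_integral_one_sub_sq_rpow_mul_cexp_le
    (a := δ + k / 2) (by positivity)
  set c := ‖∫ v : Euc k, brMultiplier δ v‖
  refine ⟨2 ^ (δ + ((k + 1 : ℕ) + 1) / 2) * ((∫ ξ : Euc (k + 1), ‖brMultiplier δ ξ‖) + B * c),
    fun x ↦ le_mul_one_add_rpow_neg (norm_nonneg x) (by positivity) (by positivity)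
      (by positivity) (norm_fourierInv_le_integral_norm _ x) fun hx ↦ ?_⟩
  have h_axis : brKernel (k + 1) δ x = brKernel (k + 1) δ (EuclideanSpace.single 0 ‖x‖) :=
    fourierInv_eq_of_norm_eq (fun ξ η h ↦ by rw [h]) (by simp)
  rw [h_axis, brKernel_single_zero k hδ, norm_mul]
  calc _ ≤ B * ‖x‖ ^ (-(δ + k / 2 + 1)) * c := by gcongr; exact h_osc _ hx
    _ = B * c * ‖x‖ ^ (-(δ + ((k + 1 : ℕ) + 1) / 2)) := by
        push_cast
        ring_nf

end BochnerRieszKernel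

section SchwartzConvolution

open scoped ContDiff SchwartzMap

universe u

variable {E F : Type u} [NormedAddCommGroup E] [NormedSpace ℝ E] [MeasurableSpace E]
  [BorelSpace E] {μ : Measure E} [NormedAddCommGroup F] [NormedSpace ℝ F] [NormedSpace ℂ F]
  {K : E → ℂ} {C M : ℝ}

lemma exists_norm_integral_smul_schwartzMap_le [FiniteDimensional ℝ E]
    [μ.IsAddHaarMeasure] (hM : 0 ≤ M) (hb : ∀ y, ‖K y‖ ≤ C * (1 + ‖y‖) ^ (-M)) (Φ : 𝓢(E, F)) :
    ∃ C', 0 ≤ C' ∧ ∀ x, ‖∫ y, K y • Φ (x - y) ∂μ‖ ≤ C' * (1 + ‖x‖) ^ (-M) := by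
  have hC : 0 ≤ C := by simpa using (norm_nonneg _).trans (hb 0)
  set L : ℝ := Module.finrank ℝ E + 1
  obtain ⟨A, hA, hΦ⟩ :=
    (hasDerivDecay_schwartzMap Φ (M + L)).exists_norm_iteratedFDeriv_le 0
  simp only [norm_iteratedFDeriv_zero] at hΦ
  refine ⟨C * A * ∫ y, (1 + ‖y‖) ^ (-L) ∂μ, by positivity, fun x ↦ ?_⟩
  have h_int : Integrable (fun y ↦ C * A * (1 + ‖x‖) ^ (-M) * (1 + ‖x - y‖) ^ (-L)) μ :=
    ((integrable_one_add_norm (by simp [L])).comp_sub_left x).const_mul _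
  calc ‖∫ y, K y • Φ (x - y) ∂μ‖
      ≤ ∫ y, C * A * (1 + ‖x‖) ^ (-M) * (1 + ‖x - y‖) ^ (-L) ∂μ := by
        refine norm_integral_le_of_norm_le h_int (.of_forall fun y ↦ ?_)
        have h_peetre := one_add_norm_add_rpow_neg_le x (y - x) hM
        rw [add_sub_cancel, norm_sub_rev] at h_peetre
        have h_cancel : (1 + ‖x - y‖) ^ M * (1 + ‖x - y‖) ^ (-(M + L)) =
            (1 + ‖x - y‖) ^ (-L) := by
          rw [← rpow_add (by positivity)]
          ring_nf
        grw [norm_smul, hb, hΦ, h_peetre, ← h_cancel]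
        exact le_of_eq (by ring)
    _ = C * A * (∫ y, (1 + ‖y‖) ^ (-L) ∂μ) * (1 + ‖x‖) ^ (-M) := by
        rw [integral_const_mul, integral_sub_left_eq_self (fun y ↦ (1 + ‖y‖) ^ (-L))]
        ring

variable [SMulCommClass ℝ ℂ F]

lemma hasFDerivAt_integral_smul_schwartzMap [SecondCountableTopology E] (hK : Integrable K μ)
    (Φ : 𝓢(E, F)) (x : E) :
    HasFDerivAt (fun x ↦ ∫ y, K y • Φ (x - y) ∂μ)
      (∫ y, K y • SchwartzMap.fderivCLM ℝ E F Φ (x - y) ∂μ) x := by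
  obtain ⟨A, -, hA⟩ := (hasDerivDecay_schwartzMap Φ 0).exists_norm_iteratedFDeriv_le 0
  obtain ⟨B, -, hB⟩ := (hasDerivDecay_schwartzMap (SchwartzMap.fderivCLM ℝ E F Φ)
    0).exists_norm_iteratedFDeriv_le 0
  simp only [norm_iteratedFDeriv_zero, neg_zero, rpow_zero, mul_one] at hA hB
  have h_meas {G : Type u} [NormedAddCommGroup G] [NormedSpace ℝ G] [NormedSpace ℂ G] (Ψ : 𝓢(E, G))
      (x : E) : AEStronglyMeasurable (fun y ↦ K y • Ψ (x - y)) μ :=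
    hK.aestronglyMeasurable.smul (Ψ.continuous.comp (by fun_prop)).aestronglyMeasurable
  refine hasFDerivAt_integral_of_dominated_of_fderiv_le (bound := fun y ↦ ‖K y‖ * B)
    (F' := fun x y ↦ K y • SchwartzMap.fderivCLM ℝ E F Φ (x - y)) Filter.univ_mem
    (.of_forall (h_meas Φ)) ?_ (h_meas _ x) (.of_forall fun y x _ ↦ ?_) (hK.norm.mul_const B)
    (.of_forall fun y x _ ↦ ?_)
  · refine (hK.norm.mul_const A).mono' (h_meas Φ x) (.of_forall fun y ↦ ?_)
    grw [norm_smul, hA]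
  · grw [norm_smul, hB]
  · have h_deriv := (Φ.differentiableAt (x := x - y)).hasFDerivAt.comp x
      ((hasFDerivAt_id x).sub_const y)
    exact h_deriv.const_smul (K y)

lemma contDiff_integral_smul_schwartzMap [SecondCountableTopology E] (hK : Integrable K μ)
    (Φ : 𝓢(E, F)) : ContDiff ℝ ∞ fun x ↦ ∫ y, K y • Φ (x - y) ∂μ := by
  refine contDiff_infty.2 fun j ↦ ?_
  induction j generalizing F with
  | zero =>
    exact contDiff_zero.2 <| continuous_iff_continuousAt.2 fun x ↦
      (hasFDerivAt_integral_smul_schwartzMap hK Φ x).continuousAt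
  | succ j ih =>
    exact contDiff_succ_iff_hasFDerivAt.2
      ⟨_, ih (SchwartzMap.fderivCLM ℝ E F Φ), hasFDerivAt_integral_smul_schwartzMap hK Φ⟩

/-- All derivatives fall on the Schwartz factor. -/
lemma hasDerivDecay_integral_smul_schwartzMap [FiniteDimensional ℝ E]
    [μ.IsAddHaarMeasure] (hM : 0 ≤ M) (hK : Integrable K μ)
    (hb : ∀ y, ‖K y‖ ≤ C * (1 + ‖y‖) ^ (-M)) (Φ : 𝓢(E, F)) :
    HasDerivDecay M fun x ↦ ∫ y, K y • Φ (x - y) ∂μ where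
  contDiff := contDiff_integral_smul_schwartzMap hK Φ
  exists_norm_iteratedFDeriv_le j := by
    induction j generalizing F with
    | zero =>
      simpa only [norm_iteratedFDeriv_zero] using exists_norm_integral_smul_schwartzMap_le hM hb Φ
    | succ j ih =>
      have h_fderiv := funext fun x ↦ (hasFDerivAt_integral_smul_schwartzMap hK Φ x).fderiv
      simpa only [← norm_iteratedFDeriv_fderiv, h_fderiv] using
        ih (SchwartzMap.fderivCLM ℝ E F Φ)

end SchwartzConvolution

section KernelSmoothness

open scoped SchwartzMap

variable {n : ℕ} {δ : ℝ}

/-- A smooth cutoff equal to `1` on the unit ball leaves the multiplier unchanged. -/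
lemma exists_brKernel_eq_integral_smul_schwartzMap (hδ : 0 < δ) :
    ∃ Φ : 𝓢(Euc n, ℂ), ∀ x, brKernel n δ x = ∫ y, brKernel n δ y • Φ (x - y) := by
  let b : ContDiffBump (0 : Euc n) := ⟨1, 2, one_pos, one_lt_two⟩
  let χ : 𝓢(Euc n, ℂ) := (b.hasCompactSupport.comp_left Complex.ofReal_zero).toSchwartzMap
    (Complex.ofRealCLM.contDiff.comp b.contDiff)
  have h_cutoff : (fun ξ ↦ brMultiplier δ ξ • χ ξ) = brMultiplier δ := by
    ext ξ
    rcases le_or_gt 1 ‖ξ‖ with h | h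
    · simp [brMultiplier_eq_zero hδ h]
    · have : χ ξ = 1 := by
        change ((b ξ : ℝ) : ℂ) = 1
        rw [b.one_of_mem_closedBall (by simpa using h.le), Complex.ofReal_one]
      rw [this, smul_eq_mul, mul_one]
  let Φ : 𝓢(Euc n, ℂ) := 𝓕⁻ χ
  have h_fourier : 𝓕 ⇑Φ = (χ : Euc n → ℂ) := by
    rw [← SchwartzMap.fourier_coe, FourierTransform.fourier_fourierInv_eq]
  refine ⟨Φ, fun x ↦ ?_⟩
  calc brKernel n δ x = 𝓕⁻ (fun ξ ↦ brMultiplier δ ξ • 𝓕 ⇑Φ ξ) x := by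
        rw [h_fourier, h_cutoff]
        rfl
    _ = ∫ y, brKernel n δ y • Φ (x - y) :=
        fourierInv_smul_fourier (integrable_brMultiplier hδ) Φ.integrable x

lemma hasDerivDecay_brKernel (hδ : (n - 1) / 2 < δ) :
    HasDerivDecay (δ + (n + 1) / 2) (brKernel n δ) := by
  rcases n.eq_zero_or_pos with rfl | hn
  · exact hasDerivDecay_of_subsingleton _ _
  have hn1 : (1 : ℝ) ≤ n := by exact_mod_cast hn
  have hδ0 : 0 < δ := by linarith
  obtain ⟨C, hb⟩ := exists_norm_brKernel_le hn hδ0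
  obtain ⟨Φ, hΦ⟩ := exists_brKernel_eq_integral_smul_schwartzMap (n := n) hδ0
  have h_cont : Continuous (brKernel n δ) :=
    continuous_fourierInv_of_integrable (integrable_brMultiplier hδ0)
  have h_int : Integrable (brKernel n δ) :=
    ((integrable_one_add_norm (by simp; linarith)).const_mul C).mono'
      h_cont.aestronglyMeasurable (.of_forall hb)
  rw [funext hΦ]
  exact hasDerivDecay_integral_smul_schwartzMap (by positivity) h_int hb Φ

end KernelSmoothness

section MaximalBochnerRiesz

variable {n : ℕ} {p δ r : ℝ}

lemma exists_maxBR_rpow_le (hr : 0 < r) (hr1 : r ≤ 1) (hM : n < r * (δ + (n + 1) / 2)) (N : ℕ) :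
    ∃ A : ℝ≥0, ∀ (f : Euc n → ℂ) (x : Euc n),
      maxBR n δ f x ^ r ≤ A * centeredMax volume (fun z ↦ grandMax N f z ^ r) x := by
  have hM0 : 0 < δ + ((n : ℝ) + 1) / 2 := pos_of_mul_pos_right (n.cast_nonneg.trans_lt hM) hr.le
  have hδ : ((n : ℝ) - 1) / 2 < δ := by linarith [mul_le_of_le_one_left hM0.le hr1]
  obtain ⟨A, hA⟩ := (hasDerivDecay_brKernel hδ).exists_enorm_integral_dil_rpow_le hr hr1 hM N
  refine ⟨A, fun f x ↦ ?_⟩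
  rw [← ENNReal.le_rpow_inv_iff hr]
  exact iSup₂_le fun R hR ↦ (ENNReal.le_rpow_inv_iff hr).2 (hA f x R⁻¹ (inv_pos.2 hR))

lemma exists_weakNorm_le_of_rpow_le_centeredMax (μ : Measure (Euc n)) [μ.IsAddHaarMeasure]
    (hr : 0 < r) (hrp : r < p) (A : ℝ≥0) :
    ∃ C : ℝ≥0, 0 < C ∧ ∀ g h : Euc n → ℝ≥0∞,
      (∀ x, g x ^ r ≤ A * centeredMax μ (fun z ↦ h z ^ r) x) →
        weakNorm μ p g ≤ C * weakNorm μ p h := by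
  have hq : 1 < p / r := (one_lt_div hr).2 hrp
  obtain ⟨B, hB⟩ : ∃ B : ℝ≥0,
      B = 2 * (5 ^ n * ENNReal.ofReal (p / r / (p / r - 1))) ^ (1 / (p / r)) :=
    ⟨_, ENNReal.coe_toNNReal (by finiteness)⟩
  refine ⟨((A + 1) * B) ^ r⁻¹ + 1, by positivity, fun g h hgh ↦ ?_⟩
  have h_max : weakNorm μ (p / r) (fun x ↦ g x ^ r) ≤
      (A + 1) * (B * weakNorm μ p h ^ r) := calc
    _ ≤ weakNorm μ (p / r) fun x ↦ ((A + 1 : ℝ≥0) : ℝ≥0∞) * centeredMax μ (fun z ↦ h z ^ r) x :=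
        weakNorm_mono (by positivity) fun x ↦ (hgh x).trans (by gcongr; simp)
    _ ≤ ((A + 1 : ℝ≥0) : ℝ≥0∞) * weakNorm μ (p / r) (centeredMax μ fun z ↦ h z ^ r) :=
        weakNorm_const_mul_le (by positivity)
    _ ≤ _ := by
        grw [weakNorm_centeredMax_le hq, ← hB, weakNorm_rpow_le hr]
        simp
  calc weakNorm μ p g = weakNorm μ (p / r / r⁻¹) (fun x ↦ (g x ^ r) ^ r⁻¹) := by
        simp only [ENNReal.rpow_rpow_inv hr.ne']
        rw [div_inv_eq_mul, div_mul_cancel₀ _ hr.ne']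
    _ ≤ ((A + 1) * (B * weakNorm μ p h ^ r)) ^ r⁻¹ := by
        grw [weakNorm_rpow_le (inv_pos.2 hr), h_max]
    _ = ((((A + 1) * B) ^ r⁻¹ : ℝ≥0) : ℝ≥0∞) * weakNorm μ p h := by
        rw [← mul_assoc, ENNReal.mul_rpow_of_nonneg _ _ (by positivity),
          ENNReal.rpow_rpow_inv hr.ne', ENNReal.coe_rpow_of_nonneg _ (by positivity)]
        push_cast
        rfl
    _ ≤ _ := by
        gcongr
        simp

theorem maxBochnerRiesz_weakHardy_to_weakLp_general (N : ℕ) (hp : 0 < p)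
    (hδ : n / p - (n + 1) / 2 < δ) (hδ' : (n - 1) / 2 < δ) :
    ∃ C : ℝ≥0, 0 < C ∧ ∀ f : Euc n → ℂ,
      weakNorm volume p (maxBR n δ f) ≤ C * whNorm N volume p f := by
  set M : ℝ := δ + (n + 1) / 2 with hM_def
  have hM : 0 < M := by linarith [n.cast_nonneg (α := ℝ)]
  have hnp : (n : ℝ) / M < p := by
    rw [div_lt_comm₀ hM hp]
    linarith
  have hn1 : (n : ℝ) / M < 1 := by
    rw [div_lt_one hM]
    linarith
  obtain ⟨r, hnr, hr⟩ := exists_between (lt_min hnp hn1)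
  have hr0 : 0 < r := (by positivity : (0 : ℝ) ≤ n / M).trans_lt hnr
  obtain ⟨A, hA⟩ := exists_maxBR_rpow_le hr0 (hr.trans_le (min_le_right _ _)).le
    ((div_lt_iff₀ hM).1 hnr) N
  obtain ⟨C, hC, hle⟩ := exists_weakNorm_le_of_rpow_le_centeredMax volume hr0
    (hr.trans_le (min_le_left _ _)) A
  exact ⟨C, hC, fun f ↦ hle _ _ (hA f)⟩

end MaximalBochnerRiesz

/-- Let `0 < p ≤ 1` and `δ > n/p - (n+1)/2`. Then there is a constant
`C > 0`, independent of `f`, such that for every `f ∈ WH^p(ℝⁿ)` one has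
`‖T^δ_* f‖_{WL^p} ≤ C ‖f‖_{WH^p}` (with respect to Lebesgue measure). -/
theorem maxBochnerRiesz_weakHardy_to_weakLp (n : ℕ) (p δ : ℝ)
    (hp0 : 0 < p) (hp1 : p ≤ 1)
    (hδ : (n : ℝ) / p - ((n : ℝ) + 1) / 2 < δ) :
    ∃ C : ℝ≥0, 0 < C ∧ ∀ f : Euc n → ℂ,
      whNorm (⌊(n : ℝ) * (1 / p - 1)⌋.toNat) volume p f ≠ ⊤ →
      weakNorm volume p (maxBR n δ f) ≤
        (C : ℝ≥0∞) * whNorm (⌊(n : ℝ) * (1 / p - 1)⌋.toNat) volume p f := by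
  have hδ' : ((n : ℝ) - 1) / 2 < δ := by linarith [le_div_self n.cast_nonneg hp0 hp1]
  obtain ⟨C, hC, h⟩ := maxBochnerRiesz_weakHardy_to_weakLp_general _ hp0 hδ hδ'
  exact ⟨C, hC, fun f _ ↦ h f⟩
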